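/- arXiv:1701.04942 — 3 statements merged into one kernel-verified Lean document; each statement's English description precedes it below -/
import Mathlib

section
/- Let p be an odd prime and n ≥ 1. Suppose A ⊆ 𝔽_p^n does not contain p pairwise distinct elements x₁, …, x_p with x₁ + ⋯ + x_p = 0. Then |A| ≤ (2^p − p − 2) · C_p^n, where C_p = inf_{0<x<1} ((1 − x^p)/(1 − x)) · x^{−(p−1)/3}. -/
/-- The Ellenberg–Gijswijt constant `C_p = inf_{0<x<1} ((1-x^p)/(1-x)) x^{-(p-1)/3}`. -/
noncomputable def EGconst (p : ℕ) : ℝ :=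
  sInf {y : ℝ | ∃ x : ℝ, 0 < x ∧ x < 1 ∧
    y = (1 - x ^ p) / (1 - x) * x ^ (-(((p : ℝ) - 1) / 3))}

/-!
For `x : Fin p → A` expand the determinant of the matrix `[x i = x j]`: the sum of
`sign σ * [x ∘ σ = x] * [∑ i, x i = 0]` over all permutations `σ` is
`[x injective] * [∑ i, x i = 0]`, which vanishes by assumption. If `σ` has at most two cycles,
then `x ∘ σ = x` and `∑ i, x i = 0` force `x` to be constant. As
`∑ σ, sign σ * X ^ (number of cycles of σ) = X (X - 1) ⋯ (X - p + 1)` is `X ^ p - X` modulo `p`,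
these permutations contribute `-1` on the diagonal, so the permutations with at least three cycles
sum up to the diagonal tensor, whose partition rank is `#A`.

On the other hand `[∑ i, x i = 0]` is a polynomial in the coordinates of the `x i`, of degree at
most `p - 1` in each of the `n` coordinates. In a monomial of it, one of the at least three cycles
of `σ` carries at most a third of the degree, and the equality of the `x i` along this cycle
splits off a diagonal tensor in the variables of the cycle. Grouping by the cycle as a set, of at
most `p - 2` elements, and by the exponents of its monomial bounds the partition rank by
`2 ^ p - p - 2` times the number of monomials of degree at most `n (p - 1) / 3`, which is at most
`C_p ^ n`.
-/

open Finset

section PartitionRank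

variable {ι κ X K : Type*}

/-- `F` is a product of two factors depending on complementary nonempty parts of the coordinate set
`I`, i.e. a tensor on `I` of partition rank at most one. Tensors on `I` are modelled as functions of
all the coordinates which depend on those in `I`. -/
def IsSlice [DecidableEq ι] [Mul K] (I : Finset ι) (F : (ι → X) → K) : Prop :=
  ∃ S T : Finset ι, S.Nonempty ∧ T.Nonempty ∧ Disjoint S T ∧ S ∪ T = I ∧
    ∃ f g : (ι → X) → K, DependsOn f S ∧ DependsOn g T ∧ ∀ x, F x = f x * g x

/-- The tensor on `I` with diagonal entries `c` and zeros elsewhere; for `I = ∅` this formula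
gives the constant `∑ a, c a`. -/
def diagonalTensor [Fintype X] [DecidableEq X] [CommSemiring K] (I : Finset ι) (c : X → K)
    (x : ι → X) : K :=
  ∑ a, c a * ∏ i ∈ I, if x i = a then 1 else 0

section DiagonalTensor

variable [Fintype X] [DecidableEq X] [CommSemiring K] {I : Finset ι}

lemma diagonalTensor_apply {i₀ : ι} (hi₀ : i₀ ∈ I) (c : X → K) (x : ι → X) :
    diagonalTensor I c x = if ∀ i ∈ I, x i = x i₀ then c (x i₀) else 0 := by
  have hne : ∀ a ≠ x i₀, (∏ i ∈ I, if x i = a then 1 else 0 : K) = 0 := fun a ha ↦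
    prod_eq_zero hi₀ (if_neg ha.symm)
  rw [diagonalTensor, sum_eq_single (x i₀) (fun a _ ha ↦ by rw [hne a ha, mul_zero]) (by simp),
    prod_ite_zero]
  simp

lemma dependsOn_diagonalTensor (I : Finset ι) (c : X → K) :
    DependsOn (diagonalTensor I c) (I : Set ι) := fun x y hxy ↦
  sum_congr rfl fun a _ ↦ congrArg (c a * ·) <| prod_congr rfl fun i hi ↦ by rw [hxy i hi]

lemma sum_mul_diagonalTensor_update [DecidableEq ι] {i₀ : ι} (hi₀ : i₀ ∈ I) (h c : X → K)
    (x : ι → X) :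
    ∑ a, h a * diagonalTensor I c (Function.update x i₀ a) =
      diagonalTensor (I.erase i₀) (fun a ↦ h a * c a) x := by
  refine sum_congr rfl fun a _ ↦ ?_
  have hiff : (∀ i ∈ I, Function.update x i₀ a i = a) ↔ ∀ i ∈ I.erase i₀, x i = a := by
    grind [Function.update_apply]
  rw [diagonalTensor_apply hi₀, Function.update_self, prod_ite_zero, mul_assoc]
  simp only [hiff, prod_const_one, mul_ite, mul_one, mul_zero]

end DiagonalTensor

lemma exists_finrank_le_ncard_support [Finite X] [Field K] (W : Submodule K (X → K)) :
    ∃ h ∈ W, Module.finrank K W ≤ (Function.support h).ncard := by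
  classical
  have := Fintype.ofFinite X
  obtain ⟨h, hW, hmax⟩ := Set.Finite.exists_maximalFor' Function.support (W : Set (X → K))
    (Set.toFinite _) ⟨0, W.zero_mem⟩
  -- Adding to `h` an element vanishing on its support would enlarge the support.
  let restrict : W →ₗ[K] (Function.support h → K) := LinearMap.funLeft K K (↑) ∘ₗ W.subtype
  have restrict_injective : Function.Injective restrict := by
    rw [injective_iff_map_eq_zero]
    intro w hw
    have hw0 : ∀ a, h a ≠ 0 → (w : X → K) a = 0 := fun a ha ↦ congrFun hw ⟨a, ha⟩
    have hle : Function.support (h + (w : X → K)) ⊆ Function.support h :=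
      hmax (W.add_mem hW w.2) fun a ha ↦ by simpa [hw0 a ha] using ha
    ext a
    by_contra hwa
    have ha : h a = 0 := by_contra fun ha ↦ hwa (hw0 a ha)
    exact hle (a := a) (by simpa [ha] using hwa) ha
  refine ⟨h, hW, (LinearMap.finrank_le_finrank_of_injective restrict_injective).trans_eq ?_⟩
  rw [Module.finrank_fintype_fun_eq_card, ← Nat.card_eq_fintype_card, Nat.card_coe_set_eq]

lemma exists_orthogonal_ncard_le [Fintype X] [Field K] (J : Finset κ) (u : κ → X → K) (C : Set X) :
    ∃ h : X → K, Function.support h ⊆ C ∧ (∀ j ∈ J, ∑ a, h a * u j a = 0) ∧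
      C.ncard ≤ #J + (Function.support h).ncard := by
  classical
  let φ : (X → K) →ₗ[K] (J → K) × ((Cᶜ : Set X) → K) :=
    (Matrix.vecMulLinear (Matrix.of fun a (j : J) ↦ u j a)).prod (LinearMap.funLeft K K (↑))
  obtain ⟨h, hφ, hle⟩ := exists_finrank_le_ncard_support (LinearMap.ker φ)
  obtain ⟨hJ, hC⟩ := Prod.ext_iff.1 (LinearMap.mem_ker.1 hφ)
  refine ⟨h, fun a ha ↦ by_contra fun haC ↦ ha (congrFun hC ⟨a, haC⟩),
    fun j hj ↦ congrFun hJ ⟨j, hj⟩, ?_⟩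
  have hrank := φ.finrank_range_add_finrank_ker
  have hrange := (LinearMap.range φ).finrank_le
  simp only [Module.finrank_prod, Module.finrank_fintype_fun_eq_card, Fintype.card_coe,
    ← Nat.card_eq_fintype_card (α := X), ← Set.ncard_add_ncard_compl C,
    ← Nat.card_eq_fintype_card (α := (Cᶜ : Set X)), Nat.card_coe_set_eq] at hrank hrange
  omega

namespace IsSlice

variable [DecidableEq ι]

lemma exists_mem [CommMagma K] {I : Finset ι} {F : (ι → X) → K} (hF : IsSlice I F) {i₀ : ι}
    (hi₀ : i₀ ∈ I) :
    ∃ S T : Finset ι, i₀ ∈ S ∧ T.Nonempty ∧ Disjoint S T ∧ S ∪ T = I ∧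
      ∃ f g : (ι → X) → K, DependsOn f S ∧ DependsOn g T ∧ ∀ x, F x = f x * g x := by
  obtain ⟨S, T, hS, hT, hST, rfl, f, g, hf, hg, hfg⟩ := hF
  rcases mem_union.1 hi₀ with hi | hi
  · exact ⟨S, T, hi, hT, hST, rfl, f, g, hf, hg, hfg⟩
  · exact ⟨T, S, hi, hS, hST.symm, union_comm _ _, g, f, hg, hf, fun x ↦ by rw [hfg, mul_comm]⟩

lemma not_singleton [Mul K] {i : ι} {F : (ι → X) → K} : ¬ IsSlice {i} F := by
  rintro ⟨S, T, ⟨s, hs⟩, ⟨t, ht⟩, hST, hI, -⟩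
  have hsi : s = i := mem_singleton.1 (hI ▸ mem_union_left T hs)
  have hti : t = i := mem_singleton.1 (hI ▸ mem_union_right S ht)
  exact disjoint_left.1 hST hs (hsi.trans hti.symm ▸ ht)

/-- In the first case the contraction of the coordinate `i₀` against any `h` orthogonal to `u`
vanishes. -/
lemma factor_or_contract [Fintype X] [CommSemiring K] {I : Finset ι} {F : (ι → X) → K}
    (hF : IsSlice I F) {i₀ : ι} (hi₀ : i₀ ∈ I) :
    (∃ (u : X → K) (v : (ι → X) → K), ∀ x a, F (Function.update x i₀ a) = u a * v x) ∨
      ∀ h : X → K, IsSlice (I.erase i₀) fun x ↦ ∑ a, h a * F (Function.update x i₀ a) := by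
  obtain ⟨S, T, hi, hT, hST, rfl, f, g, hf, hg, hfg⟩ := hF.exists_mem hi₀
  have hiT : i₀ ∉ T := disjoint_left.1 hST hi
  have hg_update : ∀ x a, g (Function.update x i₀ a) = g x := fun x a ↦
    hg fun i hi ↦ Function.update_of_ne (ne_of_mem_of_not_mem hi hiT) _ _
  rcases eq_or_ne S {i₀} with rfl | hS
  · refine .inl ⟨fun a ↦ f fun _ ↦ a, g, fun x a ↦ ?_⟩
    rw [hfg, hg_update, hf (y := fun _ ↦ a) (by simp)]
  · refine .inr fun h ↦ ⟨S.erase i₀, T, ?_, hT, disjoint_of_subset_left (erase_subset _ _) hST,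
      by rw [erase_union_distrib, erase_eq_of_notMem hiT],
      fun x ↦ ∑ a, h a * f (Function.update x i₀ a), g, fun x y hxy ↦ ?_, hg, fun x ↦ ?_⟩
    · exact ((nontrivial_iff_ne_singleton hi).2 hS).erase_nonempty
    · refine sum_congr rfl fun a _ ↦ congrArg (h a * ·) (hf fun i hi ↦ ?_)
      rcases eq_or_ne i i₀ with rfl | hne
      · simp
      · rw [Function.update_of_ne hne, Function.update_of_ne hne]
        exact hxy i (by simpa [hne] using hi)
    · simp only [hfg, hg_update, sum_mul, mul_assoc]

end IsSlice

/-- The slices splitting off a coordinate `i₀` alone are removed by contracting that coordinate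
against a vector `h` orthogonal to them; what is lost in the diagonal by the zeros of `h` is at most
the number of slices removed. -/
theorem ncard_support_le_of_sum_isSlice_eq_diagonalTensor [DecidableEq ι] [Fintype X]
    [DecidableEq X] [Field K] {I : Finset ι} (hI : I.Nonempty) (J : Finset κ)
    (F : κ → (ι → X) → K) (hF : ∀ j ∈ J, IsSlice I (F j)) (c : X → K)
    (hc : ∀ x, ∑ j ∈ J, F j x = diagonalTensor I c x) :
    (Function.support c).ncard ≤ #J := by
  classical
  induction hI using Nonempty.cons_induction generalizing J F c with
  | singleton i =>
    obtain rfl : J = ∅ := eq_empty_of_forall_notMem fun j hj ↦ (hF j hj).not_singleton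
    have hc0 : c = 0 := funext fun a ↦ by
      simpa [diagonalTensor_apply (mem_singleton_self i)] using (hc fun _ ↦ a).symm
    simp [hc0]
  | cons i₀ I hi₀ _ ih =>
    have hmem : i₀ ∈ cons i₀ I hi₀ := mem_cons_self _ _
    have herase : (cons i₀ I hi₀).erase i₀ = I := erase_cons hi₀
    let Splits (j : κ) : Prop := ∃ (u : X → K) (v : (ι → X) → K),
      ∀ x a, F j (Function.update x i₀ a) = u a * v x
    have hu : ∀ j, ∃ u : X → K, Splits j → ∃ v : (ι → X) → K,
        ∀ x a, F j (Function.update x i₀ a) = u a * v x := fun j ↦ by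
      by_cases hj : Splits j
      · exact hj.imp fun _ hv _ ↦ hv
      · exact ⟨0, fun h ↦ absurd h hj⟩
    choose u hu using hu
    obtain ⟨h, hsupp, horth, hcard⟩ :=
      exists_orthogonal_ncard_le {j ∈ J | Splits j} u (Function.support c)
    have hsplit : ∀ x, ∑ j ∈ J with Splits j, ∑ a, h a * F j (Function.update x i₀ a) = 0 :=
      fun x ↦ sum_eq_zero fun j hj ↦ by
        obtain ⟨v, hv⟩ := hu j (mem_filter.1 hj).2
        simp only [hv, ← mul_assoc, ← sum_mul, horth j hj, zero_mul]
    have hrest : ∀ x, ∑ j ∈ J with ¬ Splits j, ∑ a, h a * F j (Function.update x i₀ a) =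
        diagonalTensor I (fun a ↦ h a * c a) x := fun x ↦ by
      rw [← herase, ← sum_mul_diagonalTensor_update hmem, ← zero_add (∑ j ∈ J with _, _),
        ← hsplit x, sum_filter_add_sum_filter_not, sum_comm]
      simp only [← mul_sum, hc]
    have hle := ih {j ∈ J | ¬ Splits j} _ (fun j hj ↦ by
      obtain ⟨hjJ, hj⟩ := mem_filter.1 hj
      exact herase ▸ ((hF j hjJ).factor_or_contract hmem).resolve_left hj h) _ hrest
    rw [Function.support_mul, Set.inter_eq_left.2 hsupp] at hle
    have := card_filter_add_card_filter_not (s := J) (fun j ↦ Splits j)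
    omega

end PartitionRank

section CycleCount

open Equiv Perm Polynomial

variable {ι Y : Type*}

/-- The number of cycles of `σ`, with its fixed points counted as cycles. -/
noncomputable def cycleCount (σ : Perm ι) : ℕ :=
  Nat.card (Quotient (SameCycle.setoid σ))

lemma comp_perm_eq_self_iff [Finite ι] {σ : Perm ι} {x : ι → Y} :
    x ∘ σ = x ↔ ∀ i j, σ.SameCycle i j → x i = x j := by
  refine ⟨fun h i j hij ↦ ?_, fun h ↦ funext fun i ↦ h _ _ (sameCycle_apply_left.2 (.refl σ i))⟩
  obtain ⟨k, rfl⟩ := hij.exists_nat_pow_eq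
  have hx : Function.Semiconj x σ id := congrFun h
  rw [← iterate_eq_pow, hx.iterate_right k, Function.iterate_id, id]

lemma card_comp_perm_eq_self [Finite ι] (σ : Perm ι) :
    Nat.card {x : ι → Y // x ∘ σ = x} = Nat.card Y ^ cycleCount σ := by
  rw [cycleCount, ← Nat.card_fun]
  exact Nat.card_congr <| (Equiv.subtypeEquivRight fun x ↦ comp_perm_eq_self_iff).trans
    (Setoid.liftEquiv (SameCycle.setoid σ))

lemma ncard_range_le_cycleCount [Finite ι] {σ : Perm ι} {x : ι → Y} (hx : x ∘ σ = x) :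
    (Set.range x).ncard ≤ cycleCount σ := by
  let lift : Quotient (SameCycle.setoid σ) → Y := Quotient.lift x (comp_perm_eq_self_iff.1 hx)
  have hrange : Set.range x ⊆ Set.range lift := by
    rintro _ ⟨i, rfl⟩
    exact ⟨⟦i⟧, rfl⟩
  exact (Set.ncard_le_ncard hrange).trans (Finite.card_range_le lift)

variable [Fintype ι] [DecidableEq ι]

lemma card_sameCycle_add_cycleCount_le (σ : Perm ι) (a : ι) :
    #{i | σ.SameCycle a i} + cycleCount σ ≤ Fintype.card ι + 1 := by
  classical
  let mk : ι → Quotient (SameCycle.setoid σ) := Quotient.mk _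
  have := Fintype.ofFinite (Quotient (SameCycle.setoid σ))
  have hsurj : univ ⊆ insert (mk a) (image mk ({i | σ.SameCycle a i} : Finset ι)ᶜ) := fun q _ ↦ by
    obtain ⟨i, rfl⟩ := Quotient.exists_rep q
    by_cases hi : σ.SameCycle a i
    · exact mem_insert.2 (.inl (Quotient.sound hi.symm))
    · exact mem_insert_of_mem (mem_image_of_mem _ (by simpa using hi))
  have hle := (card_le_card hsurj).trans ((card_insert_le _ _).trans
    (Nat.succ_le_succ card_image_le))
  rw [card_univ, ← Nat.card_eq_fintype_card, ← cycleCount] at hle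
  have := card_add_card_compl ({i | σ.SameCycle a i} : Finset ι)
  omega

lemma exists_cycleCount_mul_sum_sameCycle_le [Nonempty ι] (σ : Perm ι) (w : ι → ℕ) :
    ∃ a, cycleCount σ * ∑ i with σ.SameCycle a i, w i ≤ ∑ i, w i := by
  classical
  have := Fintype.ofFinite (Quotient (SameCycle.setoid σ))
  have : Nonempty (Quotient (SameCycle.setoid σ)) := ‹Nonempty ι›.map (Quotient.mk _)
  let weight (q : Quotient (SameCycle.setoid σ)) : ℕ := ∑ i with ⟦i⟧ = q, w i
  obtain ⟨q, -, hq⟩ := exists_min_image univ weight univ_nonempty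
  obtain ⟨a, rfl⟩ := Quotient.exists_rep q
  have hweight : weight ⟦a⟧ = ∑ i with σ.SameCycle a i, w i :=
    sum_congr (filter_congr fun i _ ↦ Quotient.eq.trans sameCycle_comm) fun _ _ ↦ rfl
  refine ⟨a, ?_⟩
  rw [← hweight, cycleCount, Nat.card_eq_fintype_card, ← card_univ, ← smul_eq_mul,
    ← sum_fiberwise univ (fun i ↦ (⟦i⟧ : Quotient (SameCycle.setoid σ))) w]
  exact card_nsmul_le_sum _ _ _ hq

/-- The left-hand side is the determinant of the matrix with entries `[x i = x j]`. -/
lemma sum_sign_comp_perm_eq_self (R : Type*) [CommRing R] [DecidableEq Y] (x : ι → Y)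
    [Decidable (Function.Injective x)] :
    ∑ σ : Perm ι, ((sign σ : ℤ) : R) * (if x ∘ σ = x then 1 else 0) =
      if Function.Injective x then 1 else 0 := by
  let M : Matrix ι ι R := .of fun i j ↦ if x i = x j then 1 else 0
  have hdet : ∑ σ : Perm ι, ((sign σ : ℤ) : R) * (if x ∘ σ = x then 1 else 0) = M.det := by
    rw [Matrix.det_apply']
    refine sum_congr rfl fun σ _ ↦ ?_
    simp only [M, Matrix.of_apply, prod_ite_zero, prod_const_one, funext_iff, mem_univ,
      forall_const, Function.comp_apply]
  rw [hdet]
  split_ifs with hx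
  · have hM : M = 1 := by ext i j; simp [M, Matrix.one_apply, hx.eq_iff]
    rw [hM, Matrix.det_one]
  · obtain ⟨i, j, hij, hne⟩ := Function.not_injective_iff.1 hx
    exact Matrix.det_zero_of_row_eq hne (funext fun k ↦ by simp [M, hij])

/-- Both sides evaluated at a natural number `k` count the injections `ι → Fin k`. -/
theorem sum_sign_mul_X_pow_cycleCount (ι : Type*) [Fintype ι] [DecidableEq ι] :
    ∑ σ : Perm ι, C (sign σ : ℤ) * X ^ cycleCount σ = descPochhammer ℤ (Fintype.card ι) := by
  classical
  refine eq_of_infinite_eval_eq _ _ <|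
    (Set.infinite_range_of_injective Nat.cast_injective).mono ?_
  rintro _ ⟨k, rfl⟩
  have hcount (σ : Perm ι) :
      (k : ℤ) ^ cycleCount σ = ∑ x : ι → Fin k, if x ∘ σ = x then 1 else 0 := by
    rw [sum_boole, ← Fintype.card_subtype, ← Nat.card_eq_fintype_card, card_comp_perm_eq_self,
      Nat.card_fin, Nat.cast_pow]
  have hinj : ((k.descFactorial (Fintype.card ι) : ℕ) : ℤ) =
      ∑ x : ι → Fin k, if Function.Injective x then 1 else 0 := by
    rw [sum_boole, ← Fintype.card_subtype,
      Fintype.card_congr (Equiv.subtypeInjectiveEquivEmbedding ι (Fin k)),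
      Fintype.card_embedding_eq, Fintype.card_fin]
  rw [Set.mem_ofPred_eq, descPochhammer_eval_eq_descFactorial, hinj, eval_finsetSum]
  simp only [eval_mul, eval_C, eval_pow, eval_X, hcount, mul_sum]
  rw [sum_comm]
  exact sum_congr rfl fun x _ ↦ sum_sign_comp_perm_eq_self ℤ x

lemma descPochhammer_zmod_self (p : ℕ) [Fact p.Prime] :
    descPochhammer (ZMod p) p = X ^ p - X := by
  have hp := (Fact.out : p.Prime).one_lt
  have hmonic : (X ^ p - X : (ZMod p)[X]).Monic := monic_X_pow_sub (by simpa using hp)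
  have hdeg : (descPochhammer (ZMod p) p).degree = p := by
    rw [degree_eq_natDegree (monic_descPochhammer _ _).ne_zero, descPochhammer_natDegree]
  refine eq_of_degree_sub_lt_of_eval_finset_eq univ ?_ fun a _ ↦ ?_
  · rw [card_univ, ZMod.card, ← hdeg]
    refine degree_sub_lt_left ?_ (monic_descPochhammer _ _).ne_zero ?_
    · rw [hdeg, degree_eq_natDegree hmonic.ne_zero, FiniteField.X_pow_card_sub_X_natDegree_eq _ hp]
    · rw [hmonic, monic_descPochhammer]
  · rw [eval_sub, eval_pow, eval_X, ZMod.pow_card, sub_self]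
    simpa using descPochhammer_eval_coe_nat_of_lt (R := ZMod p) (ZMod.val_lt a)

theorem sum_sign_of_cycleCount_le_two {p : ℕ} [Fact p.Prime] (hp : 2 < p)
    (hι : Fintype.card ι = p) :
    ∑ σ : Perm ι with cycleCount σ ≤ 2, ((sign σ : ℤ) : ZMod p) = -1 := by
  have hpoly : ∑ σ : Perm ι, C ((sign σ : ℤ) : ZMod p) * X ^ cycleCount σ = X ^ p - X := by
    have hint := sum_sign_mul_X_pow_cycleCount ι
    rw [hι] at hint
    rw [← descPochhammer_zmod_self, ← descPochhammer_map (Int.castRingHom (ZMod p)), ← hint,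
      Polynomial.map_sum]
    simp
  have hcoeff (k : ℕ) : ∑ σ : Perm ι with cycleCount σ = k, ((sign σ : ℤ) : ZMod p) =
      (X ^ p - X : (ZMod p)[X]).coeff k := by
    rw [← hpoly, finsetSum_coeff, sum_filter]
    exact sum_congr rfl fun σ _ ↦ by rw [coeff_C_mul_X_pow]; simp only [eq_comm]
  calc ∑ σ : Perm ι with cycleCount σ ≤ 2, ((sign σ : ℤ) : ZMod p)
      = ∑ k ∈ range 3, ∑ σ : Perm ι with cycleCount σ = k, ((sign σ : ℤ) : ZMod p) := by
        rw [sum_fiberwise_eq_sum_filter]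
        simp only [mem_range, Nat.lt_succ_iff]
    _ = ∑ k ∈ range 3, (X ^ p - X : (ZMod p)[X]).coeff k := by simp only [hcoeff]
    _ = -1 := by
        have h0 : (0 : ℕ) ≠ p := by lia
        have h1 : (1 : ℕ) ≠ p := by lia
        simp only [sum_range_succ, range_zero, sum_empty, coeff_sub, coeff_X_pow, coeff_X, h0, h1,
          hp.ne, if_false]
        norm_num

end CycleCount

section ZeroSum

open Equiv Perm

variable {p : ℕ} [Fact p.Prime] {ι V : Type*} [Fintype ι]

/-- If the two values are `a` and `b` and `a` is taken `k` times, then `k • (a - b) = 0`. -/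
lemma eq_of_ncard_range_le_two_of_sum_eq_zero [AddCommGroup V] [Module (ZMod p) V]
    (hι : Fintype.card ι = p) {x : ι → V} (hx : (Set.range x).ncard ≤ 2) (hsum : ∑ i, x i = 0)
    (i j : ι) : x i = x j := by
  classical
  by_contra hij
  have hvalues : ∀ k, x k = x i ∨ x k = x j := by
    have hrange : {x i, x j} = Set.range x := Set.eq_of_subset_of_ncard_le
      (Set.pair_subset (Set.mem_range_self i) (Set.mem_range_self j))
      (hx.trans_eq (Set.ncard_pair hij).symm)
    exact fun k ↦ hrange.symm.subset (Set.mem_range_self k)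
  have hsmul : ((#{k | x k = x i} : ℕ) : ZMod p) • (x i - x j) = 0 :=
    calc ((#{k | x k = x i} : ℕ) : ZMod p) • (x i - x j)
        = ∑ k, if x k = x i then x i - x j else 0 := by
          rw [← sum_filter, sum_const, Nat.cast_smul_eq_nsmul]
      _ = ∑ k, (x k - x j) := sum_congr rfl fun k _ ↦ by
          rcases hvalues k with hk | hk <;> simp [hk, Ne.symm hij]
      _ = -((p : ZMod p) • x j) := by
          rw [sum_sub_distrib, hsum, sum_const, card_univ, hι, Nat.cast_smul_eq_nsmul, zero_sub]
      _ = 0 := by rw [CharP.cast_eq_zero, zero_smul, neg_zero]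
  have hdvd : p ∣ #{k | x k = x i} := (ZMod.natCast_eq_zero_iff _ _).1 <|
    (smul_eq_zero.1 hsmul).resolve_right (sub_ne_zero.2 hij)
  have hpos : 0 < #{k | x k = x i} := card_pos.2 ⟨i, by simp⟩
  have hlt : #{k | x k = x i} < Fintype.card ι :=
    card_lt_univ_of_notMem (x := j) (by simpa using Ne.symm hij)
  exact (Nat.le_of_dvd hpos hdvd).not_gt (hι ▸ hlt)

lemma comp_perm_eq_self_iff_of_cycleCount_le_two [AddCommGroup V] [Module (ZMod p) V]
    (hι : Fintype.card ι = p) {σ : Perm ι} (hσ : cycleCount σ ≤ 2) {x : ι → V}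
    (hsum : ∑ i, x i = 0) : x ∘ σ = x ↔ ∀ i j, x i = x j :=
  ⟨fun hx ↦ eq_of_ncard_range_le_two_of_sum_eq_zero hι ((ncard_range_le_cycleCount hx).trans hσ)
    hsum, fun hx ↦ funext fun _ ↦ hx _ _⟩

variable [DecidableEq ι] [DecidableEq V] [AddCommGroup V] [Module (ZMod p) V]

lemma sum_sign_of_cycleCount_le_two_comp_perm_eq_self (hp : 2 < p) (hι : Fintype.card ι = p)
    {x : ι → V} (hsum : ∑ i, x i = 0) [Decidable (∀ i j, x i = x j)] :
    ∑ σ : Perm ι with cycleCount σ ≤ 2,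
      ((sign σ : ℤ) : ZMod p) * (if x ∘ σ = x then 1 else 0) =
        -if ∀ i j, x i = x j then 1 else 0 := by
  rw [← neg_one_mul, ← sum_sign_of_cycleCount_le_two hp hι, sum_mul]
  refine sum_congr rfl fun σ hσ ↦ ?_
  simp only [comp_perm_eq_self_iff_of_cycleCount_le_two hι (mem_filter.1 hσ).2 hsum]

theorem sum_sign_of_two_lt_cycleCount_eq_diagonalTensor
    (hp : 2 < p) (hι : Fintype.card ι = p) {A : Finset V}
    (hA : ¬ ∃ x : ι → V, Function.Injective x ∧ (∀ i, x i ∈ A) ∧ ∑ i, x i = 0) (x : ι → A) :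
    ∑ σ : Perm ι with 2 < cycleCount σ, ((sign σ : ℤ) : ZMod p) *
        ((if x ∘ σ = x then 1 else 0) * if ∑ i, (x i : V) = 0 then 1 else 0) =
      diagonalTensor univ 1 x := by
  classical
  obtain ⟨i₀⟩ : Nonempty ι := Fintype.card_pos_iff.1 (by lia)
  let y : ι → V := fun i ↦ x i
  have hcomp (σ : Perm ι) : x ∘ σ = x ↔ y ∘ σ = y := (Subtype.val_injective.comp_left.eq_iff).symm
  have hconst : (∀ i ∈ univ, x i = x i₀) ↔ ∀ i j, y i = y j := by
    simp only [y, Subtype.val_inj, mem_univ, forall_const]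
    exact ⟨fun h i j ↦ (h i).trans (h j).symm, fun h i ↦ h i i₀⟩
  simp only [diagonalTensor_apply (mem_univ i₀), hconst, hcomp, Pi.one_apply]
  change ∑ σ : Perm ι with 2 < cycleCount σ, ((sign σ : ℤ) : ZMod p) *
    ((if y ∘ σ = y then 1 else 0) * if ∑ i, y i = 0 then 1 else 0) = _
  by_cases hsum : ∑ i, y i = 0
  · have hinj : ¬ Function.Injective y := fun hy ↦ hA ⟨y, hy, fun i ↦ (x i).2, hsum⟩
    have hall := sum_sign_comp_perm_eq_self (ZMod p) y
    rw [if_neg hinj, ← sum_filter_not_add_sum_filter _ (fun σ ↦ cycleCount σ ≤ 2),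
      sum_sign_of_cycleCount_le_two_comp_perm_eq_self hp hι hsum, add_neg_eq_zero] at hall
    simpa only [hsum, if_true, mul_one, not_le] using hall
  · have hy : ¬ ∀ i j, y i = y j := fun hy ↦ hsum <| by
      rw [sum_congr rfl fun i _ ↦ hy i i₀, sum_const, card_univ, hι,
        ← Nat.cast_smul_eq_nsmul (ZMod p), CharP.cast_eq_zero, zero_smul]
    simp only [hsum, hy, if_false, mul_zero, sum_const_zero]

end ZeroSum

section SliceDecomposition

open Equiv Perm

variable {ι γ X K : Type*}

/-- The blocks available as a smallest cycle: a cycle of a permutation of `ι` with at least three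
cycles misses at least two points. -/
def properBlocks (ι : Type*) [Fintype ι] [DecidableEq ι] : Finset (Finset ι) :=
  {S | S.Nonempty ∧ #S + 2 ≤ Fintype.card ι}

/-- The exponents of the monomials in the variables `γ` of degree at most `D` in each variable and
of total degree at most a third of the maximum `card γ * D`. -/
def lowDegreeExponents (γ : Type*) [Fintype γ] [DecidableEq γ] (D : ℕ) : Finset (γ → ℕ) :=
  {m ∈ Fintype.piFinset fun _ ↦ range (D + 1) | 3 * ∑ c, m c ≤ Fintype.card γ * D}

/-- The tensors which are the product of the diagonal tensor on the block `S` with entries `c` and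
of a tensor in the coordinates outside `S`. -/
def diagonalSlices [Fintype X] [DecidableEq X] [CommSemiring K] (S : Finset ι) (c : X → K) :
    Submodule K ((ι → X) → K) where
  carrier := {F | ∃ g, DependsOn g (S : Set ι)ᶜ ∧ F = diagonalTensor S c * g}
  zero_mem' := ⟨0, fun _ _ _ ↦ rfl, (mul_zero _).symm⟩
  add_mem' := by
    rintro _ _ ⟨f, hf, rfl⟩ ⟨g, hg, rfl⟩
    exact ⟨f + g, fun x y hxy ↦ congrArg₂ (· + ·) (hf hxy) (hg hxy), (mul_add _ _ _).symm⟩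
  smul_mem' := by
    rintro r _ ⟨g, hg, rfl⟩
    exact ⟨r • g, fun x y hxy ↦ congrArg (r • ·) (hg hxy), (mul_smul_comm _ _ _).symm⟩

variable [Fintype ι] [DecidableEq ι] [Fintype X] [DecidableEq X]

lemma isSlice_univ_of_mem_diagonalSlices [CommSemiring K] {S : Finset ι} (hS : S ∈ properBlocks ι)
    {c : X → K} {F : (ι → X) → K} (hF : F ∈ diagonalSlices S c) : IsSlice univ F := by
  obtain ⟨-, hne, hcard⟩ := mem_filter.1 hS
  obtain ⟨g, hg, rfl⟩ := hF
  refine ⟨S, Sᶜ, hne, ?_, disjoint_compl_right, union_compl S, _, g, dependsOn_diagonalTensor S c,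
    by rwa [coe_compl], fun _ ↦ rfl⟩
  rw [← card_pos, card_compl]
  lia

/-- On the tensor `[x ∘ σ = x]` the coordinates in one cycle of `σ` are equal, and they are not
related to the coordinates outside that cycle. -/
lemma comp_perm_mul_prod_mem_diagonalSlices [CommSemiring K] (σ : Perm ι) (a : ι) (w : ι → X → K) :
    (fun x : ι → X ↦ (if x ∘ σ = x then 1 else 0) * ∏ i, w i (x i)) ∈
      diagonalSlices {i | σ.SameCycle a i} fun b ↦ ∏ i with σ.SameCycle a i, w i b := by
  set S : Finset ι := {i | σ.SameCycle a i} with hS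
  have mem_S {i : ι} : i ∈ S ↔ σ.SameCycle a i := by simp [hS]
  have ha : a ∈ S := mem_S.2 (.refl σ a)
  refine ⟨fun x ↦ (if ∀ i ∉ S, x (σ i) = x i then 1 else 0) * ∏ i ∈ Sᶜ, w i (x i),
    fun x y hxy ↦ ?_, funext fun x ↦ ?_⟩
  · have hxy' : ∀ i ∉ S, x i = y i := fun i hi ↦ hxy i (by simpa using hi)
    have hσ : ∀ i ∉ S, x (σ i) = y (σ i) := fun i hi ↦
      hxy' _ fun h ↦ hi (mem_S.2 (sameCycle_apply_right.1 (mem_S.1 h)))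
    have hfix : (∀ i ∉ S, x (σ i) = x i) ↔ ∀ i ∉ S, y (σ i) = y i :=
      forall₂_congr fun i hi ↦ by rw [hxy' i hi, hσ i hi]
    have hprod : ∏ i ∈ Sᶜ, w i (x i) = ∏ i ∈ Sᶜ, w i (y i) :=
      prod_congr rfl fun i hi ↦ by rw [hxy' i (mem_compl.1 hi)]
    simp only [hfix, hprod]
  · have hfix : x ∘ σ = x ↔ (∀ i ∈ S, x i = x a) ∧ ∀ i ∉ S, x (σ i) = x i := by
      refine ⟨fun h ↦ ⟨fun i hi ↦ ?_, fun i _ ↦ congrFun h i⟩, fun ⟨hin, hout⟩ ↦ funext fun i ↦ ?_⟩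
      · exact (comp_perm_eq_self_iff.1 h a i (mem_S.1 hi)).symm
      · by_cases hi : i ∈ S
        · exact (hin _ (mem_S.2 (sameCycle_apply_right.2 (mem_S.1 hi)))).trans (hin i hi).symm
        · exact hout i hi
    rw [Pi.mul_apply, diagonalTensor_apply ha]
    by_cases hin : ∀ i ∈ S, x i = x a
    · rw [if_pos hin, ← prod_mul_prod_compl S, prod_congr rfl fun i hi ↦ by rw [hin i hi]]
      simp only [hfix, and_iff_right hin]
      ring
    · simp only [hfix, hin, false_and, if_false, zero_mul]

variable [Fintype γ] [DecidableEq γ]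

/-- Among at least three cycles, the one of least weight carries at most a third of the degree. -/
lemma exists_sameCycle_mem_lowDegreeExponents {σ : Perm ι} (hσ : 2 < cycleCount σ) {D : ℕ}
    {d : γ → ι → ℕ} (hd : ∀ c, ∑ i, d c i ≤ D) :
    ∃ a, ({i | σ.SameCycle a i} : Finset ι) ∈ properBlocks ι ∧
      (fun c ↦ ∑ i with σ.SameCycle a i, d c i) ∈ lowDegreeExponents γ D := by
  have : Nonempty ι := by
    by_contra h
    rw [not_nonempty_iff] at h
    simp [cycleCount] at hσ
  obtain ⟨a, ha⟩ := exists_cycleCount_mul_sum_sameCycle_le σ fun i ↦ ∑ c, d c i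
  refine ⟨a, ?_, ?_⟩
  · have := card_sameCycle_add_cycleCount_le σ a
    exact mem_filter.2 ⟨mem_univ _, ⟨a, mem_filter.2 ⟨mem_univ a, .refl σ a⟩⟩, by lia⟩
  · refine mem_filter.2 ⟨Fintype.mem_piFinset.2 fun c ↦ mem_range.2 <| Nat.lt_succ_of_le <|
      (sum_le_sum_of_subset (filter_subset _ _)).trans (hd c), ?_⟩
    calc 3 * ∑ c, ∑ i with σ.SameCycle a i, d c i
        ≤ cycleCount σ * ∑ i with σ.SameCycle a i, ∑ c, d c i := by
          rw [sum_comm]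
          exact Nat.mul_le_mul_right _ hσ
      _ ≤ ∑ i, ∑ c, d c i := ha
      _ = ∑ c, ∑ i, d c i := sum_comm
      _ ≤ Fintype.card γ * D := by
          rw [← smul_eq_mul, ← card_univ]
          exact sum_le_card_nsmul _ _ _ fun c _ ↦ hd c

theorem comp_perm_mul_prod_eval_mem_iSup_diagonalSlices [CommSemiring K] {σ : Perm ι}
    (hσ : 2 < cycleCount σ) {D : ℕ} (v : X → γ → K) {f : γ → MvPolynomial ι K}
    (hf : ∀ c, (f c).totalDegree ≤ D) :
    (fun x : ι → X ↦
      (if x ∘ σ = x then 1 else 0) * ∏ c, MvPolynomial.eval (fun i ↦ v (x i) c) (f c)) ∈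
      ⨆ j ∈ properBlocks ι ×ˢ lowDegreeExponents γ D,
        diagonalSlices j.1 fun b ↦ ∏ c, v b c ^ j.2 c := by
  have hexpand : (fun x : ι → X ↦
      (if x ∘ σ = x then 1 else 0) * ∏ c, MvPolynomial.eval (fun i ↦ v (x i) c) (f c)) =
      ∑ d ∈ Fintype.piFinset fun c ↦ (f c).support, (∏ c, (f c).coeff (d c)) •
        fun x ↦ (if x ∘ σ = x then 1 else 0) * ∏ i, ∏ c, v (x i) c ^ d c i := by
    ext x
    simp only [MvPolynomial.eval_eq', prod_univ_sum, Finset.sum_apply, Pi.smul_apply, smul_eq_mul,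
      mul_sum, prod_mul_distrib]
    refine sum_congr rfl fun d _ ↦ ?_
    rw [prod_comm, mul_left_comm]
  rw [hexpand]
  refine Submodule.sum_mem _ fun d hd ↦ Submodule.smul_mem _ _ ?_
  obtain ⟨a, hblock, hdeg⟩ := exists_sameCycle_mem_lowDegreeExponents hσ (d := fun c i ↦ d c i)
    fun c ↦ (Finsupp.sum_fintype _ _ fun _ ↦ rfl).symm.trans_le <|
      (MvPolynomial.le_totalDegree (Fintype.mem_piFinset.1 hd c)).trans (hf c)
  refine Submodule.mem_iSup_of_mem (_, _) <|
    Submodule.mem_iSup_of_mem (mk_mem_product hblock hdeg) ?_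
  have hmem := comp_perm_mul_prod_mem_diagonalSlices σ a fun i (b : X) ↦ ∏ c, v b c ^ d c i
  simpa only [prod_comm (s := filter _ _), prod_pow_eq_pow_sum] using hmem

end SliceDecomposition

section Counting

lemma card_properBlocks {ι : Type*} [Fintype ι] [DecidableEq ι] (hι : 2 ≤ Fintype.card ι) :
    #(properBlocks ι) + Fintype.card ι + 2 = 2 ^ Fintype.card ι := by
  have hcompl : ((properBlocks ι)ᶜ : Finset (Finset ι)) =
      {∅, univ} ∪ powersetCard (Fintype.card ι - 1) univ := by
    ext S
    have := card_le_univ S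
    simp only [properBlocks, mem_compl, mem_filter, mem_univ, true_and, mem_union, mem_insert,
      mem_singleton, mem_powersetCard, subset_univ, ← card_eq_zero, ← card_pos,
      ← card_eq_iff_eq_univ]
    lia
  have hdisj : Disjoint {∅, univ} (powersetCard (Fintype.card ι - 1) (univ : Finset ι)) := by
    simp only [disjoint_insert_left, disjoint_singleton_left, mem_powersetCard, subset_univ,
      true_and, card_empty, card_univ]
    lia
  have hne : (∅ : Finset ι) ≠ univ := by
    rw [ne_eq, ← card_eq_iff_eq_univ, card_empty]
    lia
  rw [← Fintype.card_finset, ← card_add_card_compl (properBlocks ι), hcompl,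
    card_union_of_disjoint hdisj, card_pair hne, card_powersetCard, card_univ,
    Nat.choose_symm (by lia), Nat.choose_one_right]
  ring

/-- Every exponent `m` counted on the left contributes at least `1` to the expansion of the product
on the right, as `x < 1`. -/
lemma card_lowDegreeExponents_le {γ : Type*} [Fintype γ] [DecidableEq γ] (D : ℕ) {x : ℝ}
    (hx₀ : 0 < x) (hx₁ : x < 1) :
    (#(lowDegreeExponents γ D) : ℝ) ≤
      ((∑ j ∈ range (D + 1), x ^ j) * x ^ (-((D : ℝ) / 3))) ^ Fintype.card γ := by
  set r : ℝ := x ^ (-((D : ℝ) / 3)) with hr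
  have one_le (m : γ → ℕ) (hm : m ∈ lowDegreeExponents γ D) : 1 ≤ ∏ c, x ^ m c * r := by
    have hdeg : (3 : ℝ) * (∑ c, m c : ℕ) ≤ Fintype.card γ * D := by
      exact_mod_cast (mem_filter.1 hm).2
    rw [prod_mul_distrib, prod_pow_eq_pow_sum, prod_const, card_univ, hr, ← Real.rpow_natCast,
      ← Real.rpow_natCast, ← Real.rpow_mul hx₀.le, ← Real.rpow_add hx₀]
    exact Real.one_le_rpow_of_pos_of_le_one_of_nonpos hx₀ hx₁.le (by linarith)
  calc (#(lowDegreeExponents γ D) : ℝ)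
      ≤ ∑ m ∈ lowDegreeExponents γ D, ∏ c, x ^ m c * r := by
        simpa using card_nsmul_le_sum _ _ 1 one_le
    _ ≤ ∑ m ∈ Fintype.piFinset fun _ : γ ↦ range (D + 1), ∏ c, x ^ m c * r :=
        sum_le_sum_of_subset_of_nonneg (filter_subset _ _) fun m _ _ ↦ by positivity
    _ = ((∑ j ∈ range (D + 1), x ^ j) * r) ^ Fintype.card γ := by
        rw [← prod_univ_sum (fun _ ↦ range (D + 1)) fun _ j ↦ x ^ j * r, prod_const, card_univ,
          sum_mul]

lemma le_csInf_pow {S : Set ℝ} (hne : S.Nonempty) (hbdd : BddBelow S) {a : ℝ} {n : ℕ}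
    (h : ∀ y ∈ S, a ≤ y ^ n) : a ≤ sInf S ^ n :=
  closure_minimal h (isClosed_le continuous_const (continuous_pow n)) (csInf_mem_closure hne hbdd)

lemma card_lowDegreeExponents_le_EGconst_pow {γ : Type*} [Fintype γ] [DecidableEq γ] {p : ℕ}
    (hp : 0 < p) : (#(lowDegreeExponents γ (p - 1)) : ℝ) ≤ EGconst p ^ Fintype.card γ := by
  have geom_sum {x : ℝ} (hx₁ : x < 1) : (1 - x ^ p) / (1 - x) = ∑ j ∈ range (p - 1 + 1), x ^ j := by
    rw [Nat.sub_add_cancel hp, geom_sum_eq hx₁.ne, ← neg_sub (x ^ p), ← neg_sub x,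
      neg_div_neg_eq]
  refine le_csInf_pow (by exact ⟨_, 1 / 2, by norm_num, by norm_num, rfl⟩) ⟨0, ?_⟩ ?_
  · rintro _ ⟨x, hx₀, hx₁, rfl⟩
    rw [geom_sum hx₁]
    positivity
  · rintro _ ⟨x, hx₀, hx₁, rfl⟩
    rw [geom_sum hx₁, ← Nat.cast_pred hp]
    exact card_lowDegreeExponents_le _ hx₀ hx₁

end Counting

section ZeroSumFree

open Equiv Perm

variable {p : ℕ} [Fact p.Prime] {ι γ : Type*} [Fintype ι] [Fintype γ]

lemma totalDegree_one_sub_sum_X_pow_le (R : Type*) [CommRing R] (D : ℕ) :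
    (1 - (∑ i, MvPolynomial.X i) ^ D : MvPolynomial ι R).totalDegree ≤ D := by
  have hhom : ((∑ i, MvPolynomial.X i) ^ D : MvPolynomial ι R).IsHomogeneous D := by
    have hsum := MvPolynomial.IsHomogeneous.sum univ _ 1 fun (i : ι) _ ↦
      MvPolynomial.isHomogeneous_X R i
    simpa using hsum.pow D
  exact (MvPolynomial.totalDegree_sub _ _).trans (max_le (by simp) hhom.totalDegree_le)

/-- By Fermat's little theorem, `1 - s ^ (p - 1)` is the indicator of `s = 0`. -/
lemma ite_sum_eq_zero_eq_prod_eval (x : ι → γ → ZMod p) :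
    (if ∑ i, x i = 0 then 1 else 0 : ZMod p) =
      ∏ c, MvPolynomial.eval (fun i ↦ x i c) (1 - (∑ i, MvPolynomial.X i) ^ (p - 1)) := by
  have hcoord (c : γ) : MvPolynomial.eval (fun i ↦ x i c)
      (1 - (∑ i, MvPolynomial.X i) ^ (p - 1)) = if ∑ i, x i c = 0 then 1 else 0 := by
    simp only [map_sub, map_one, map_pow, map_sum, MvPolynomial.eval_X, ZMod.pow_card_sub_one]
    split_ifs <;> simp_all
  simp only [hcoord, prod_ite_zero, prod_const_one, funext_iff, Finset.sum_apply, Pi.zero_apply,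
    mem_univ, forall_const]

theorem card_le_card_properBlocks_mul_card_lowDegreeExponents [DecidableEq ι] [DecidableEq γ]
    (hp : 2 < p) (hι : Fintype.card ι = p) {A : Finset (γ → ZMod p)}
    (hA : ¬ ∃ x : ι → γ → ZMod p, Function.Injective x ∧ (∀ i, x i ∈ A) ∧ ∑ i, x i = 0) :
    #A ≤ #(properBlocks ι) * #(lowDegreeExponents γ (p - 1)) := by
  have : Nonempty ι := Fintype.card_pos_iff.1 (by lia)
  let slices (j : Finset ι × (γ → ℕ)) : Submodule (ZMod p) ((ι → A) → ZMod p) :=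
    diagonalSlices j.1 fun b ↦ ∏ c, (b : γ → ZMod p) c ^ j.2 c
  have hdiag : diagonalTensor univ 1 ∈
      ⨆ j ∈ properBlocks ι ×ˢ lowDegreeExponents γ (p - 1), slices j := by
    have hsum := funext (sum_sign_of_two_lt_cycleCount_eq_diagonalTensor hp hι hA)
    simp only [ite_sum_eq_zero_eq_prod_eval] at hsum
    rw [← hsum, ← Finset.sum_fn]
    exact Submodule.sum_mem _ fun σ hσ ↦ Submodule.smul_mem _ ((sign σ : ℤ) : ZMod p) <|
      comp_perm_mul_prod_eval_mem_iSup_diagonalSlices (mem_filter.1 hσ).2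
        (fun b : A ↦ (b : γ → ZMod p)) fun _ ↦ totalDegree_one_sub_sum_X_pow_le (ZMod p) (p - 1)
  obtain ⟨F, hF⟩ := (Submodule.mem_iSup_finset_iff_exists_sum _ _).1 hdiag
  have hle := ncard_support_le_of_sum_isSlice_eq_diagonalTensor univ_nonempty
    (properBlocks ι ×ˢ lowDegreeExponents γ (p - 1)) (fun j ↦ (F j : (ι → A) → ZMod p))
    (fun j hj ↦ isSlice_univ_of_mem_diagonalSlices (mem_product.1 hj).1 (F j).2) 1
    fun x ↦ by rw [← hF, Finset.sum_apply]
  rwa [Function.support_one, Set.ncard_univ, Nat.card_eq_fintype_card, Fintype.card_coe,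
    card_product] at hle

end ZeroSumFree

theorem stmt_0 (p n : ℕ) (hp : p.Prime) (hodd : Odd p) (hn : 1 ≤ n)
    (A : Finset (Fin n → ZMod p))
    (hA : ¬∃ x : Fin p → (Fin n → ZMod p),
      Function.Injective x ∧ (∀ i, x i ∈ A) ∧ ∑ i, x i = 0) :
    (A.card : ℝ) ≤ (2 ^ p - p - 2) * EGconst p ^ n := by
  have : Fact p.Prime := ⟨hp⟩
  have htwo : 2 < p := hp.two_le.lt_of_ne fun h ↦ absurd (h ▸ hodd) (by decide)
  have hcard : #A ≤ #(properBlocks (Fin p)) * #(lowDegreeExponents (Fin n) (p - 1)) :=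
    card_le_card_properBlocks_mul_card_lowDegreeExponents htwo (Fintype.card_fin p) hA
  have hblocks : (#(properBlocks (Fin p)) : ℝ) = 2 ^ p - p - 2 := by
    have h := card_properBlocks (ι := Fin p) (by simpa using htwo.le)
    rw [Fintype.card_fin] at h
    rw [← Nat.cast_ofNat, ← Nat.cast_pow, ← h]
    push_cast
    ring
  have hexponents : (#(lowDegreeExponents (Fin n) (p - 1)) : ℝ) ≤ EGconst p ^ n := by
    simpa using card_lowDegreeExponents_le_EGconst_pow (γ := Fin n) hp.pos
  calc (#A : ℝ)
      ≤ #(properBlocks (Fin p)) * #(lowDegreeExponents (Fin n) (p - 1)) := by exact_mod_cast hcard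
    _ ≤ (2 ^ p - p - 2) * EGconst p ^ n := by
        rw [← hblocks]
        gcongr
end

section
/- Let q be a prime power and n ≥ 1, and assume that the group (ℤ/qℤ)^n satisfies property D. Then 𝔰((ℤ/qℤ)^n) ≤ (q − 1)·4^n + 1; that is, every multiset of elements of (ℤ/qℤ)^n of cardinality (q − 1)·4^n + 1 contains a sub-multiset of cardinality q whose sum is 0. -/
/-- The Erdős–Ginzburg–Ziv constant of an abelian group `G`: the smallest `k` such that
every multiset of elements of `G` of cardinality `k` contains a sub-multiset of
cardinality `exp(G)` summing to zero. -/
noncomputable def EGZ (G : Type*) [AddCommMonoid G] : ℕ :=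
  sInf {k | ∀ S : Multiset G, Multiset.card S = k →
    ∃ T ≤ S, Multiset.card T = AddMonoid.exponent G ∧ T.sum = 0}

/-- Property D: every multiset of cardinality `𝔰(G) - 1` with no zero-sum sub-multiset of
cardinality `exp(G)` has each of its elements appearing with multiplicity exactly
`exp(G) - 1`. -/
def PropertyD (G : Type*) [AddCommMonoid G] [DecidableEq G] : Prop :=
  ∀ S : Multiset G, Multiset.card S = EGZ G - 1 →
    (¬∃ T ≤ S, Multiset.card T = AddMonoid.exponent G ∧ T.sum = 0) →
    ∀ a ∈ S, S.count a = AddMonoid.exponent G - 1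

/-!
Suppose `S` is a multiset of length `𝔰(G) - 1` without zero-sum sub-multisets of length `q`. By
property D, `S` consists of `q - 1` copies of a set `A`, so `q` elements of `A` sum to zero only if
they are all equal. Modulo `p`, the indicator of `x₁ + ⋯ + x_q = 0` on `(ℤ/qℤ)^n` is
`∏ₜ (x₁ₜ + ⋯ + x_qₜ + q - 1).choose (q - 1)`, of total degree `n * (q - 1) < n * q`, so every term
of its expansion has degree less than `n` in one of the `xᵢ`. Hence `∑ₐ f₁ a ⋯ f_q a = 0` as soon as
every `fᵢ` lies in the space `V` of functions orthogonal on `A` to the monomials of degree less than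
`n`. No nonzero element of `V` vanishes on the support of an `h` in `V` with maximal support, so
multiplication by a power of `h` embeds `V` into the annihilator of `V`, whence `2 * dim V ≤ |A|`.
As `dim V` is at least `|A|` minus the number `(2 * n - 1).choose (n - 1)` of monomials, `|A|` is at
most twice that number, that is, `(2 * n).choose n ≤ 4 ^ n`.
-/

open Finset

section SliceRank

lemma exists_mem_forall_eq_zero_of_mul_eq_zero {R A : Type*} [Semiring R] [NoZeroDivisors R]
    [Finite A] (V : Submodule R (A → R)) :
    ∃ h ∈ V, ∀ v ∈ V, h * v = 0 → v = 0 := by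
  obtain ⟨h, hV, hmax⟩ := Set.Finite.exists_maximalFor' Function.support (V : Set (A → R))
    (Set.toFinite _) ⟨0, V.zero_mem⟩
  refine ⟨h, hV, fun v hv hhv => funext fun a => ?_⟩
  have hdisj : ∀ b, h b = 0 ∨ v b = 0 := fun b => mul_eq_zero.1 (congrFun hhv b)
  have hle : Function.support h ⊆ Function.support (h + v) := fun b hb => by
    simpa [(hdisj b).resolve_left hb] using hb
  by_contra hva
  have hha : h a = 0 := (hdisj a).resolve_right hva
  exact hmax (V.add_mem hV hv) hle (a := a) (by simpa [hha] using hva) hha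

lemma prod_ite_ite_eq {M κ : Type*} [CommMonoid M] [Fintype κ] [DecidableEq κ] {i j : κ}
    (hij : i ≠ j) (u v h : M) :
    ∏ k, (if k = i then u else if k = j then v else h) =
      u * (h ^ (Fintype.card κ - 2) * v) := by
  have hj : j ∈ univ.erase i := mem_erase.2 ⟨hij.symm, mem_univ j⟩
  have hrest : ∏ k ∈ (univ.erase i).erase j, (if k = i then u else if k = j then v else h) =
      h ^ (Fintype.card κ - 2) := by
    rw [prod_eq_pow_card (b := h) fun k hk => ?_, card_erase_of_mem hj,
      card_erase_of_mem (mem_univ i), card_univ, Nat.sub_sub]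
    simp only [mem_erase] at hk
    simp only [hk, if_false]
  rw [← mul_prod_erase univ _ (mem_univ i), ← mul_prod_erase _ _ hj, hrest, if_pos rfl,
    if_neg hij.symm, if_pos rfl, mul_comm v]

variable {F A : Type*} [Field F] [Fintype A]

lemma finrank_add_finrank_le_card_of_dotProduct_eq_zero (V W : Submodule F (A → F))
    (hVW : ∀ v ∈ V, ∀ w ∈ W, v ⬝ᵥ w = 0) :
    Module.finrank F V + Module.finrank F W ≤ Fintype.card A := by
  classical
  have hle : V.map (dotProductEquiv F A).toLinearMap ≤ W.dualAnnihilator := by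
    rintro _ ⟨v, hv, rfl⟩
    exact (Submodule.mem_dualAnnihilator _).2 (hVW v hv)
  calc Module.finrank F V + Module.finrank F W
      = Module.finrank F (V.map (dotProductEquiv F A).toLinearMap) + Module.finrank F W := by
        rw [LinearEquiv.finrank_map_eq]
    _ ≤ Module.finrank F W.dualAnnihilator + Module.finrank F W := by
        gcongr
        exact Submodule.finrank_mono hle
    _ = Fintype.card A := by
        rw [add_comm, Subspace.finrank_add_finrank_dualAnnihilator_eq,
          Module.finrank_fintype_fun_eq_card]

lemma two_mul_finrank_le_card_of_sum_prod_eq_zero {κ : Type*} [Fintype κ] [Nontrivial κ]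
    (V : Submodule F (A → F))
    (hV : ∀ f : κ → A → F, (∀ i, f i ∈ V) → ∑ a, ∏ i, f i a = 0) :
    2 * Module.finrank F V ≤ Fintype.card A := by
  classical
  obtain ⟨i, j, hij⟩ := exists_pair_ne κ
  obtain ⟨h, hhV, hreg⟩ := exists_mem_forall_eq_zero_of_mul_eq_zero V
  let w : A → F := h ^ (Fintype.card κ - 2)
  have hinj : Function.Injective ((LinearMap.mulLeft F w).domRestrict V) := by
    refine (injective_iff_map_eq_zero _).2 fun v hv => Subtype.ext (hreg v v.2 (funext fun a => ?_))
    have hwv : h a ^ _ * (v : A → F) a = 0 := congrFun hv a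
    exact mul_eq_zero.2 ((mul_eq_zero.1 hwv).imp_left eq_zero_of_pow_eq_zero)
  have horth : ∀ u ∈ V, ∀ v ∈ V, u ⬝ᵥ (w * v) = 0 := by
    intro u hu v hv
    have hsum := hV (fun k => if k = i then u else if k = j then v else h) fun k => by
      split_ifs <;> assumption
    simp only [← prod_apply, prod_ite_ite_eq hij] at hsum
    exact hsum
  have hrank : Module.finrank F (V.map (LinearMap.mulLeft F w)) = Module.finrank F V := by
    rw [← LinearMap.range_domRestrict, LinearMap.finrank_range_of_inj hinj]
  calc 2 * Module.finrank F V
      = Module.finrank F V + Module.finrank F (V.map (LinearMap.mulLeft F w)) := by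
        rw [hrank, two_mul]
    _ ≤ Fintype.card A := by
        refine finrank_add_finrank_le_card_of_dotProduct_eq_zero _ _ ?_
        rintro u hu _ ⟨v, hv, rfl⟩
        exact horth u hu v hv

lemma finrank_le_finrank_ker_add_finrank {K V W : Type*} [DivisionRing K] [AddCommGroup V]
    [Module K V] [FiniteDimensional K V] [AddCommGroup W] [Module K W] [FiniteDimensional K W]
    (L : V →ₗ[K] W) :
    Module.finrank K V ≤ Module.finrank K (LinearMap.ker L) + Module.finrank K W := by
  have hrange := (LinearMap.range L).finrank_le
  have hsum := L.finrank_range_add_finrank_ker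
  lia

end SliceRank

section Choose

lemma periodic_natCast_choose (R : Type*) [CommSemiring R] (p : ℕ) [Fact p.Prime] [CharP R p]
    {r j : ℕ} (hj : j < p ^ r) : Function.Periodic (fun N => (N.choose j : R)) (p ^ r) := by
  intro N
  simp only [← Polynomial.coeff_one_add_X_pow]
  rw [pow_add, add_pow_char_pow (p := p), one_pow, mul_add, mul_one, Polynomial.coeff_add,
    Polynomial.coeff_mul_X_pow', if_neg hj.not_ge, add_zero]

lemma natCast_choose_add_prime_pow_sub_one (R : Type*) [CommSemiring R] (p r N : ℕ)
    [hp : Fact p.Prime] [CharP R p] :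
    ((N + (p ^ r - 1)).choose (p ^ r - 1) : R) = if p ^ r ∣ N then 1 else 0 := by
  have hq : 0 < p ^ r := pow_pos hp.out.pos r
  rw [← (periodic_natCast_choose R p (Nat.sub_lt hq one_pos)).map_mod_nat]
  split_ifs with hN
  · obtain ⟨m, rfl⟩ := hN
    rw [Nat.mul_add_mod, Nat.mod_eq_of_lt (by lia), Nat.choose_self, Nat.cast_one]
  · have hpos : 0 < N % p ^ r := Nat.pos_of_ne_zero fun h => hN (Nat.dvd_of_mod_eq_zero h)
    have hlt := Nat.mod_lt N hq
    have hmod : (N + (p ^ r - 1)) % p ^ r = N % p ^ r - 1 := by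
      rw [← Nat.mod_add_mod, show N % p ^ r + (p ^ r - 1) = N % p ^ r - 1 + p ^ r by lia,
        Nat.add_mod_right, Nat.mod_eq_of_lt (by lia)]
    rw [hmod, Nat.choose_eq_zero_of_lt (by lia), Nat.cast_zero]

lemma sum_choose_eq_sum_finsuppAntidiag {κ : Type*} [Fintype κ] [DecidableEq κ] (c : κ → ℕ)
    (d : ℕ) : (∑ i, c i).choose d = ∑ l ∈ univ.finsuppAntidiag d, ∏ i, (c i).choose (l i) := by
  have hcoeff (N j : ℕ) :
      PowerSeries.coeff j ((1 + PowerSeries.X : PowerSeries ℕ) ^ N) = N.choose j := by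
    rw [← Nat.cast_id (N.choose j), ← Polynomial.coeff_one_add_X_pow, ← Polynomial.coeff_coe]
    simp
  simp only [← hcoeff, ← prod_pow_eq_pow_sum, PowerSeries.coeff_prod]

end Choose

section Monomials

variable {ι κ A : Type*} [Fintype ι] [Fintype κ] [Fintype A]

/-- The multi-index binomial coefficient, which plays the role of the monomial with exponents `α` in
the variables `c`: unlike the monomial, modulo `p` it depends only on `c` modulo `p ^ r` when all
`α t < p ^ r`, and such binomials span all functions of `c` modulo `p ^ r`. -/
def piChoose (c α : ι → ℕ) : ℕ := ∏ t, (c t).choose (α t)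

lemma prod_add_sum_choose [DecidableEq ι] [DecidableEq κ] (c : κ → ι → ℕ) (e : ℕ) :
    ∏ t, (e + ∑ i, c i t).choose e =
      ∑ l ∈ Fintype.piFinset fun _ : ι => (univ : Finset (Option κ)).finsuppAntidiag e,
        (∏ t, e.choose (l t none)) * ∏ i, piChoose (c i) fun t => l t (some i) := by
  have hexp (t : ι) : (e + ∑ i, c i t).choose e =
      ∑ l ∈ (univ : Finset (Option κ)).finsuppAntidiag e,
        e.choose (l none) * ∏ i, (c i t).choose (l (some i)) := by
    simpa only [Fintype.sum_option, Fintype.prod_option, Option.elim] using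
      sum_choose_eq_sum_finsuppAntidiag (fun o : Option κ => o.elim e fun i => c i t) e
  simp only [hexp, prod_univ_sum, prod_mul_distrib, piChoose]
  exact sum_congr rfl fun l _ => by rw [prod_comm]

lemma exists_sum_le_of_card_mul_lt {d e : ℕ} (α : κ → ι → ℕ) (hα : ∀ t, ∑ i, α i t ≤ e)
    (hd : Fintype.card ι * e < Fintype.card κ * (d + 1)) : ∃ i, ∑ t, α i t ≤ d := by
  have hlt : ∑ i, ∑ t, α i t < ∑ _i : κ, (d + 1) := by
    calc ∑ i, ∑ t, α i t = ∑ t, ∑ i, α i t := sum_comm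
      _ ≤ ∑ _t : ι, e := sum_le_sum fun t _ => hα t
      _ < ∑ _i : κ, (d + 1) := by simpa using hd
  obtain ⟨i, -, hi⟩ := exists_lt_of_sum_lt hlt
  exact ⟨i, Nat.lt_succ_iff.1 hi⟩

/-- The space of functions on `A` orthogonal to all `a ↦ piChoose (c a) α` with `∑ t, α t ≤ d`. The
exponents `α` are encoded as `β : Option ι →₀ ℕ` of sum exactly `d`, the value `β none` being the
slack `d - ∑ t, α t`. -/
def lowDegreeOrthogonal [DecidableEq ι] (R : Type*) [CommSemiring R] (d : ℕ) (c : A → ι → ℕ) :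
    Submodule R (A → R) :=
  LinearMap.ker (Matrix.mulVecLin (Matrix.of
    fun (β : (univ : Finset (Option ι)).finsuppAntidiag d) a =>
      (piChoose (c a) (fun t => β.1 (some t)) : R)))

lemma sum_mul_piChoose_eq_zero [DecidableEq ι] {R : Type*} [CommSemiring R] {d : ℕ}
    {c : A → ι → ℕ} {f : A → R} (hf : f ∈ lowDegreeOrthogonal R d c) {α : ι → ℕ}
    (hα : ∑ t, α t ≤ d) :
    ∑ a, f a * piChoose (c a) α = 0 := by
  let β : Option ι →₀ ℕ := Finsupp.equivFunOnFinite.symm fun o => o.elim (d - ∑ t, α t) α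
  have hβ : β ∈ (univ : Finset (Option ι)).finsuppAntidiag d := by
    simp [β, mem_finsuppAntidiag, hα]
  simpa [β, Matrix.mulVec, dotProduct, mul_comm] using
    congrFun (LinearMap.mem_ker.1 hf) ⟨β, hβ⟩

lemma card_le_finrank_lowDegreeOrthogonal_add_choose [DecidableEq ι] {F : Type*} [Field F] (d : ℕ)
    (c : A → ι → ℕ) :
    Fintype.card A ≤
      Module.finrank F (lowDegreeOrthogonal F d c) + (Fintype.card ι + d).choose d := by
  have hrows : Module.finrank F ((univ : Finset (Option ι)).finsuppAntidiag d → F) =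
      (Fintype.card ι + d).choose d := by
    simp [card_finsuppAntidiag_nat_eq_choose, Nat.add_right_comm]
  rw [← hrows, ← Module.finrank_fintype_fun_eq_card F]
  exact finrank_le_finrank_ker_add_finrank _

lemma sum_prod_mul_prod_choose_eq_zero [DecidableEq ι] [DecidableEq κ] {R : Type*}
    [CommSemiring R] {d e : ℕ} {c : A → ι → ℕ} {f : κ → A → R}
    (hd : Fintype.card ι * e < Fintype.card κ * (d + 1))
    (hf : ∀ i, f i ∈ lowDegreeOrthogonal R d c) :
    ∑ x : κ → A, (∏ i, f i (x i)) * ∏ t, ((e + ∑ i, c (x i) t).choose e : R) = 0 := by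
  have hexp (x : κ → A) := congrArg (Nat.cast (R := R)) (prod_add_sum_choose (fun i => c (x i)) e)
  push_cast at hexp
  simp only [hexp, mul_sum]
  rw [sum_comm]
  refine sum_eq_zero fun l hl => ?_
  simp only [mul_left_comm (∏ i, f i _), ← prod_mul_distrib, ← mul_sum]
  obtain ⟨i, hi⟩ : ∃ i, ∑ t, l t (some i) ≤ d := by
    refine exists_sum_le_of_card_mul_lt (e := e) (fun i t => l t (some i)) (fun t => ?_) hd
    have hl' := (mem_finsuppAntidiag.1 (Fintype.mem_piFinset.1 hl t)).1
    rw [Fintype.sum_option] at hl'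
    lia
  have hfactor := sum_prod_piFinset univ
    fun (i : κ) a => f i a * (piChoose (c a) fun t => l t (some i) : R)
  rw [Fintype.piFinset_univ] at hfactor
  rw [hfactor, prod_eq_zero (mem_univ i) (sum_mul_piChoose_eq_zero (hf i) hi), mul_zero]

end Monomials

section ZeroSums

variable {ι κ A : Type*} [Fintype ι] [Fintype κ]

lemma prod_choose_val_eq_ite {R : Type*} [CommSemiring R] (p r : ℕ) [Fact p.Prime] [CharP R p]
    (y : κ → ι → ZMod (p ^ r)) :
    ∏ t, ((p ^ r - 1 + ∑ i, (y i t).val).choose (p ^ r - 1) : R) =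
      if ∑ i, y i = 0 then 1 else 0 := by
  have hdvd (t : ι) : p ^ r ∣ ∑ i, (y i t).val ↔ (∑ i, y i) t = 0 := by
    rw [← ZMod.natCast_eq_zero_iff]
    simp
  simp only [add_comm (p ^ r - 1), natCast_choose_add_prime_pow_sub_one R p, hdvd,
    Fintype.prod_ite_zero, prod_const_one, funext_iff, Pi.zero_apply]

lemma sum_ite_mem_range_const {M : Type*} [AddCommMonoid M] [Fintype A] [DecidableEq κ]
    [Nonempty κ] {P : (κ → A) → Prop} [DecidablePred P]
    (hP : ∀ x, P x ↔ x ∈ Set.range (Function.const κ)) (g : (κ → A) → M) :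
    ∑ x, (if P x then g x else 0) = ∑ a, g (Function.const κ a) := by
  classical
  have hfilter : univ.filter P = univ.image (Function.const κ) := by
    ext x
    simp [hP]
  rw [← sum_filter, hfilter, sum_image Function.const_injective.injOn]

variable [Fintype A] {p r : ℕ} [Fact p.Prime] [Nontrivial κ] {φ : A → ι → ZMod (p ^ r)}

lemma sum_prod_eq_zero_of_mem_lowDegreeOrthogonal [DecidableEq ι] {R : Type*}
    [CommSemiring R] [CharP R p] {d : ℕ} (hκ : Fintype.card κ = p ^ r)
    (hι : Fintype.card ι ≤ d + 1)
    (hφ : ∀ x : κ → A, ∑ i, φ (x i) = 0 → x ∈ Set.range (Function.const κ)) {f : κ → A → R}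
    (hf : ∀ i, f i ∈ lowDegreeOrthogonal R d fun a t => (φ a t).val) :
    ∑ a, ∏ i, f i a = 0 := by
  classical
  have hzero_iff (x : κ → A) : ∑ i, φ (x i) = 0 ↔ x ∈ Set.range (Function.const κ) := by
    refine ⟨hφ x, ?_⟩
    rintro ⟨a, rfl⟩
    ext t
    simp [hκ]
  have hdeg : Fintype.card ι * (p ^ r - 1) < Fintype.card κ * (d + 1) := by
    have hpos : 0 < p ^ r := hκ ▸ Fintype.card_pos
    calc Fintype.card ι * (p ^ r - 1) ≤ (d + 1) * (p ^ r - 1) := by gcongr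
      _ < (d + 1) * p ^ r := by gcongr; exact Nat.sub_lt hpos one_pos
      _ = Fintype.card κ * (d + 1) := by rw [hκ, mul_comm]
  have hvanish := sum_prod_mul_prod_choose_eq_zero hdeg hf
  simp only [prod_choose_val_eq_ite, mul_ite, mul_one, mul_zero] at hvanish
  rwa [sum_ite_mem_range_const hzero_iff] at hvanish

theorem card_le_centralBinom_of_sum_eq_zero (hκ : Fintype.card κ = p ^ r)
    (hφ : ∀ x : κ → A, ∑ i, φ (x i) = 0 → x ∈ Set.range (Function.const κ)) :
    Fintype.card A ≤ (Fintype.card ι).centralBinom := by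
  classical
  obtain _ | _ := isEmpty_or_nonempty ι
  · obtain ⟨i, j, hij⟩ := exists_pair_ne κ
    rw [Fintype.card_eq_zero (α := ι), Nat.centralBinom_zero, Fintype.card_le_one_iff]
    intro a b
    obtain ⟨c, hc⟩ := hφ (Function.update (Function.const κ a) j b) (Subsingleton.elim _ _)
    have hca : c = a := by simpa [hij] using congrFun hc i
    have hcb : c = b := by simpa using congrFun hc j
    exact hca.symm.trans hcb
  · obtain ⟨d, hd⟩ : ∃ d, Fintype.card ι = d + 1 :=
      Nat.exists_eq_succ_of_ne_zero Fintype.card_ne_zero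
    have hdim := two_mul_finrank_le_card_of_sum_prod_eq_zero
      (lowDegreeOrthogonal (ZMod p) d fun a t => (φ a t).val)
      fun f => sum_prod_eq_zero_of_mem_lowDegreeOrthogonal hκ hd.le hφ
    have hcodim := card_le_finrank_lowDegreeOrthogonal_add_choose (F := ZMod p) d
      fun a t => (φ a t).val
    have hbinom : (d + 1).centralBinom = 2 * (d + 1 + d).choose d := by
      rw [Nat.centralBinom, show 2 * (d + 1) = 2 * d + 1 + 1 by ring, Nat.choose_succ_succ,
        Nat.choose_symm_half, two_mul (Nat.choose _ _), show d + 1 + d = 2 * d + 1 by ring]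
    rw [hd] at hcodim ⊢
    lia

end ZeroSums

section ErdosGinzburgZiv

variable {G : Type*} [AddCommMonoid G]

lemma mem_range_const_of_sum_eq_zero [DecidableEq G] {κ : Type*} [Fintype κ] {S : Multiset G}
    (hcount : ∀ a ∈ S, S.count a = Fintype.card κ - 1)
    (hS : ¬∃ T ≤ S, Multiset.card T = Fintype.card κ ∧ T.sum = 0)
    {x : κ → S.toFinset} (hx : ∑ i, (x i : G) = 0) : x ∈ Set.range (Function.const κ) := by
  by_contra hconst
  let T : Multiset G := univ.val.map fun i => (x i : G)
  have hcard : Multiset.card T = Fintype.card κ := by simp [T]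
  refine hS ⟨T, Multiset.le_iff_count.2 fun a => ?_, hcard, hx⟩
  by_cases ha : a ∈ S
  · rw [hcount a ha, ← hcard]
    refine Nat.le_sub_one_of_lt ((Multiset.count_le_card a T).lt_of_ne fun hall => hconst ?_)
    refine ⟨⟨a, Multiset.mem_toFinset.2 ha⟩, funext fun i => Subtype.ext ?_⟩
    exact Multiset.count_eq_card.1 hall (x i) (Multiset.mem_map_of_mem _ (mem_univ_val i))
  · rw [Multiset.count_eq_zero_of_notMem]
    · exact Nat.zero_le _
    · intro haT
      obtain ⟨i, -, rfl⟩ := Multiset.mem_map.1 haT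
      exact ha (Multiset.mem_toFinset.1 (x i).2)

lemma exists_card_eq_EGZ_sub_one (hG : 0 < EGZ G) :
    ∃ S : Multiset G, Multiset.card S = EGZ G - 1 ∧
      ¬∃ T ≤ S, Multiset.card T = AddMonoid.exponent G ∧ T.sum = 0 := by
  have hnotMem := Nat.notMem_of_lt_sInf (Nat.sub_lt hG one_pos)
  simpa only [Set.mem_ofPred_eq, not_forall, exists_prop] using! hnotMem

lemma exponent_pi_const {ι : Type*} [Nonempty ι] :
    AddMonoid.exponent (ι → G) = AddMonoid.exponent G := by
  apply Nat.dvd_antisymm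
  · refine AddMonoid.exponent_dvd_of_forall_nsmul_eq_zero fun g => funext fun i => ?_
    exact AddMonoid.exponent_nsmul_eq_zero (g i)
  · exact AddMonoidHom.exponent_dvd (f := Pi.evalAddMonoidHom _ (Classical.arbitrary ι))
      (Function.surjective_eval _)

/-- Every finite abelian group `G` of exponent `q` and rank at most `Fintype.card ι` has such a
`φ`. -/
theorem stmt_2_general {ι : Type*} [Fintype ι] [DecidableEq G] {q : ℕ} (hq : IsPrimePow q)
    (hG : AddMonoid.exponent G = q) (φ : G →+ ι → ZMod q) (hφ : Function.Injective φ)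
    (hD : PropertyD G) : EGZ G ≤ (q - 1) * (Fintype.card ι).centralBinom + 1 := by
  by_contra! hlt
  obtain ⟨S, hcard, hS⟩ := exists_card_eq_EGZ_sub_one (G := G) (by lia)
  have hcount := hD S hcard hS
  rw [hG] at hcount hS
  have hSq : Multiset.card S = #S.toFinset * (q - 1) := by
    rw [← Multiset.toFinset_sum_count_eq]
    exact sum_const_nat fun a ha => hcount a (Multiset.mem_toFinset.1 ha)
  have hbound : Fintype.card S.toFinset ≤ (Fintype.card ι).centralBinom := by
    have := Fin.nontrivial_iff_two_le.2 hq.two_le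
    obtain ⟨p, r, hp, -, rfl⟩ := (isPrimePow_nat_iff q).1 hq
    have := Fact.mk hp
    refine card_le_centralBinom_of_sum_eq_zero (κ := Fin (p ^ r)) (φ := fun a => φ a)
      (Fintype.card_fin _) fun x hx => ?_
    rw [← map_sum, map_eq_zero_iff φ hφ] at hx
    exact mem_range_const_of_sum_eq_zero (by simpa using hcount) (by simpa using hS) hx
  rw [Fintype.card_coe] at hbound
  have := Nat.mul_le_mul_right (q - 1) hbound
  lia

end ErdosGinzburgZiv

theorem stmt_2 (q n : ℕ) (hq : IsPrimePow q) (hn : 1 ≤ n)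
    (hD : PropertyD (Fin n → ZMod q)) :
    EGZ (Fin n → ZMod q) ≤ (q - 1) * 4 ^ n + 1 := by
  have := Fin.pos_iff_nonempty.1 hn
  have hexp : AddMonoid.exponent (Fin n → ZMod q) = q :=
    exponent_pi_const.trans (ZMod.exponent q)
  calc EGZ (Fin n → ZMod q) ≤ (q - 1) * (Fintype.card (Fin n)).centralBinom + 1 :=
        stmt_2_general hq hexp (AddMonoidHom.id _) Function.injective_id hD
    _ ≤ (q - 1) * 4 ^ n + 1 := by
        rw [Fintype.card_fin]
        gcongr
        exact Nat.centralBinom_le_four_pow n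
end

section
/- Let k = p₁^{r₁} ⋯ p_m^{r_m} be the prime factorization of k ≥ 2, and let n ≥ 1. Suppose that for each 1 ≤ i ≤ m, the group (ℤ/p_i^{r_i}ℤ)^n satisfies property D. Then 𝔰((ℤ/kℤ)^n) ≤ (k − 1)·4^n + k. -/
open Finset Matrix

/-! Blocks with sum zero modulo `a` can be extracted greedily and then combined modulo `b`, so
coprime factors of `k` can be treated separately; this leaves `k = q = p ^ r`.

There property D says that an extremal multiset is `q - 1` copies of a set `T`, and absence of
zero-sums of length `q` makes the indicator of `x 1 + ⋯ + x q = 0` on `T ^ q` the indicator of the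
diagonal. As the coordinates lie in `ℤ/q`, this indicator is, over `ℤ/p`, a combination of products
`∏ i, P i (x i)` of products of binomial coefficients, with total degree less than `q` in each of
the `n` coordinates. Hence some factor `P i` has degree less than `n`. So if `V` is the space of
functions on `T` orthogonal to all `P` of degree less than `n`, then `∑ a ∈ T, g 1 a * ⋯ * g q a`
vanishes for all `g i` in `V`. A space with this property has dimension at most `|T| / 2`, whence
`|T|` is at most twice the number `(2 * n - 1).choose n` of monomials of degree less than `n` in
`n` variables, that is `(2 * n).choose n ≤ 4 ^ n`.
-/

/-- `ForcesZeroSum G m L` says that every multiset of `L` elements of `G` contains a sub-multiset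
of `m` elements with sum zero. For `m` the exponent of `G`, the least such `L` is `EGZ G`. -/
def ForcesZeroSum (G : Type*) [AddCommMonoid G] (m L : ℕ) : Prop :=
  ∀ S : Multiset G, S.card = L → ∃ T ≤ S, T.card = m ∧ T.sum = 0

/-- A finite set `T` is zero-sum rigid of length `m` if all `m`-tuples of elements of `T` with sum
zero are constant. -/
def IsZeroSumRigid {G : Type*} [AddCommMonoid G] (m : ℕ) (T : Finset G) : Prop :=
  ∀ x : Fin m → G, (∀ i, x i ∈ T) → ∑ i, x i = 0 → ∀ i j, x i = x j

theorem exists_le_map_eq_of_le_map {α β : Type*} {f : α → β} {S : Multiset α} {T : Multiset β}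
    (h : T ≤ S.map f) : ∃ U ≤ S, U.map f = T := by
  have hT : T ∈ (S.map f).powersetCard T.card := Multiset.mem_powersetCard.2 ⟨h, rfl⟩
  rw [Multiset.powersetCard_map, Multiset.mem_map] at hT
  obtain ⟨U, hU, hUT⟩ := hT
  exact ⟨U, (Multiset.mem_powersetCard.1 hU).1, hUT⟩

theorem exists_le_card_eq {α : Type*} {S : Multiset α} {m : ℕ} (h : m ≤ S.card) :
    ∃ T ≤ S, T.card = m := by
  have hpos : 0 < (S.powersetCard m).card := by
    simpa only [Multiset.card_powersetCard] using Nat.choose_pos h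
  obtain ⟨T, hT⟩ := Multiset.card_pos_iff_exists_mem.1 hpos
  exact ⟨T, Multiset.mem_powersetCard.1 hT⟩

namespace ForcesZeroSum

variable {G H K : Type*} [AddCommMonoid G] [AddCommMonoid H] [AddCommMonoid K]
  {m a b L L' A B : ℕ}

theorem mono (h : ForcesZeroSum G m L) (hL : L ≤ L') : ForcesZeroSum G m L' := by
  intro S hS
  obtain ⟨S', hS'S, hS'⟩ := exists_le_card_eq (hL.trans_eq hS.symm)
  obtain ⟨T, hTS', hT⟩ := h S' hS'
  exact ⟨T, hTS'.trans hS'S, hT⟩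

theorem exists_le_sum_map_eq_zero {α : Type*} (h : ForcesZeroSum G m L) (f : α → G)
    {S : Multiset α} (hS : S.card = L) : ∃ U ≤ S, U.card = m ∧ (U.map f).sum = 0 := by
  obtain ⟨T, hTS, hTm, hT⟩ := h (S.map f) (by rwa [Multiset.card_map])
  obtain ⟨U, hUS, rfl⟩ := exists_le_map_eq_of_le_map hTS
  exact ⟨U, hUS, by rwa [Multiset.card_map] at hTm, hT⟩

theorem exists_sum_le_forall_sum_map_eq_zero {α : Type*} (h : ForcesZeroSum G m L) (f : α → G)
    (t : ℕ) {S : Multiset α} (hS : S.card = m * t + L) :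
    ∃ R : Multiset (Multiset α), R.card = t + 1 ∧ R.sum ≤ S ∧
      ∀ U ∈ R, U.card = m ∧ (U.map f).sum = 0 := by
  induction t generalizing S with
  | zero =>
    obtain ⟨U, hUS, hU⟩ := h.exists_le_sum_map_eq_zero f (hS.trans (by simp))
    exact ⟨{U}, by simp, by simpa using hUS, by simpa using hU⟩
  | succ t ih =>
    obtain ⟨U, hUS, hU⟩ := (h.mono (Nat.le_add_left L _)).exists_le_sum_map_eq_zero f hS
    obtain ⟨W, rfl⟩ := Multiset.le_iff_exists_add.1 hUS
    obtain ⟨R, hRt, hRW, hR⟩ := ih (S := W) <| by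
      rw [Multiset.card_add, hU.1, mul_add] at hS
      lia
    refine ⟨U ::ₘ R, by simp [hRt], ?_, by simpa using ⟨hU, hR⟩⟩
    rw [Multiset.sum_cons]
    gcongr

-- Extract `B + 1` disjoint blocks of `a` elements, each with sum in the kernel of `f`; then `b` of
-- these blocks have sums adding up to an element of the kernel of `g`.
theorem mul (f : G →+ H) (g : G →+ K) (hfg : ∀ x, f x = 0 → g x = 0 → x = 0)
    (hH : ForcesZeroSum H a A) (hK : ForcesZeroSum K b (B + 1)) :
    ForcesZeroSum G (a * b) (a * B + A) := by
  intro S hS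
  obtain ⟨R, hRB, hRS, hR⟩ := hH.exists_sum_le_forall_sum_map_eq_zero f B hS
  obtain ⟨P, hPR, hPb, hPg⟩ := hK.exists_le_sum_map_eq_zero (fun U => g U.sum) hRB
  have hP : ∀ U ∈ P, U.card = a ∧ (U.map f).sum = 0 := fun U hU => hR U (Multiset.mem_of_le hPR hU)
  have hcard : P.sum.card = a * b := by
    rw [← Multiset.join, Multiset.card_join, Multiset.map_congr rfl fun U hU => (hP U hU).1,
      Multiset.map_const', Multiset.sum_replicate, hPb, smul_eq_mul, mul_comm]
  have hsum : P.sum.sum = (P.map Multiset.sum).sum :=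
    map_multiset_sum Multiset.sumAddMonoidHom P
  refine ⟨P.sum, ?_, hcard, hfg _ ?_ ?_⟩
  · obtain ⟨Q, rfl⟩ := Multiset.le_iff_exists_add.1 hPR
    exact (Multiset.le_add_right _ _).trans (Multiset.sum_add P Q ▸ hRS)
  · rw [hsum, map_multiset_sum, Multiset.map_map]
    refine Multiset.sum_eq_zero fun y hy => ?_
    obtain ⟨U, hU, rfl⟩ := Multiset.mem_map.1 hy
    exact (map_multiset_sum f U).trans (hP U hU).2
  · rwa [hsum, map_multiset_sum, Multiset.map_map]

section ZMod

variable {ι : Type*}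

theorem mul_zmod_of_coprime (hab : a.Coprime b) (ha : ForcesZeroSum (ι → ZMod a) a A)
    (hb : ForcesZeroSum (ι → ZMod b) b (B + 1)) :
    ForcesZeroSum (ι → ZMod (a * b)) (a * b) (a * B + A) := by
  let e : ZMod (a * b) →+ ZMod a × ZMod b := (ZMod.chineseRemainder hab).toAddEquiv
  refine mul (((AddMonoidHom.fst _ _).comp e).compLeft ι)
    (((AddMonoidHom.snd _ _).comp e).compLeft ι) (fun x hxa hxb => funext fun i => ?_) ha hb
  exact (ZMod.chineseRemainder hab).map_eq_zero_iff.1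
    (Prod.ext (congrFun hxa i) (congrFun hxb i))

theorem zmod_of_forall_primeFactors (c : ℕ) {k : ℕ} (hk : k ≠ 0)
    (h : ∀ p ∈ k.primeFactors, ForcesZeroSum (ι → ZMod (p ^ k.factorization p))
      (p ^ k.factorization p) ((p ^ k.factorization p - 1) * c + 1)) :
    ForcesZeroSum (ι → ZMod k) k ((k - 1) * c + 1) := by
  induction k using Nat.recOnPosPrimePosCoprime with
  | zero => exact absurd rfl hk
  | one => exact fun S hS => ⟨S, le_rfl, by simpa using hS, Subsingleton.elim _ _⟩
  | prime_pow p r hp hr =>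
    have hpr := h p (by simp [Nat.primeFactors_prime_pow hr.ne' hp])
    rwa [hp.factorization_pow, Finsupp.single_eq_same] at hpr
  | coprime a b ha hb hab iha ihb =>
    have hbound : (a * b - 1) * c + 1 = a * ((b - 1) * c) + ((a - 1) * c + 1) := by
      have hsub : a * b - 1 = a * (b - 1) + (a - 1) := by
        rw [Nat.mul_sub_one]
        have : a ≤ a * b := Nat.le_mul_of_pos_right a (by lia)
        lia
      rw [hsub]
      ring
    rw [hbound]
    refine mul_zmod_of_coprime hab (iha (by lia) fun p hp => ?_) (ihb (by lia) fun p hp => ?_)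
    · have hpa := h p (hab.primeFactors_mul ▸ mem_union_left _ hp)
      rwa [Nat.factorization_eq_of_coprime_left hab (by simpa using hp)] at hpa
    · have hpb := h p (hab.primeFactors_mul ▸ mem_union_right _ hp)
      rwa [Nat.factorization_eq_of_coprime_right hab (by simpa using hp)] at hpb

end ZMod

end ForcesZeroSum

section EGZ

open AddMonoid (exponent)

variable {G : Type*} [AddCommMonoid G]

theorem exists_le_card_eq_exponent_of_exponent_le_count [DecidableEq G] {S : Multiset G} {x : G}
    (h : exponent G ≤ S.count x) : ∃ T ≤ S, T.card = exponent G ∧ T.sum = 0 :=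
  ⟨Multiset.replicate (exponent G) x, Multiset.le_count_iff_replicate_le.1 h,
    Multiset.card_replicate _ _, by
      rw [Multiset.sum_replicate, AddMonoid.exponent_nsmul_eq_zero]⟩

theorem forcesZeroSum_exponent_card_mul_exponent [Fintype G] :
    ForcesZeroSum G (exponent G) (Fintype.card G * exponent G) := by
  classical
  intro S hS
  obtain ⟨x, -, hx⟩ : ∃ x ∈ univ, exponent G ≤ S.count x := by
    refine exists_le_of_sum_le univ_nonempty ?_
    rw [Multiset.sum_count_eq_card fun x _ => mem_univ x, hS, sum_const, card_univ, smul_eq_mul]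
  exact exists_le_card_eq_exponent_of_exponent_le_count hx

theorem forcesZeroSum_exponent_iff_egz_le [Finite G] {L : ℕ} :
    ForcesZeroSum G (exponent G) L ↔ EGZ G ≤ L := by
  have := Fintype.ofFinite G
  have hmem : ForcesZeroSum G (exponent G) (EGZ G) :=
    Nat.sInf_mem (s := {L | ForcesZeroSum G (exponent G) L})
      ⟨_, forcesZeroSum_exponent_card_mul_exponent⟩
  exact ⟨fun h => Nat.sInf_le h, hmem.mono⟩

theorem isZeroSumRigid_toFinset [DecidableEq G] {m : ℕ} {S : Multiset G}
    (hfree : ¬∃ T ≤ S, T.card = m ∧ T.sum = 0) (hcount : ∀ x ∈ S, m - 1 ≤ S.count x) :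
    IsZeroSumRigid m S.toFinset := by
  intro x hx hsum
  by_contra! ⟨i, j, hij⟩
  have hcard : (univ.val.map x).card = m := by simp
  refine hfree ⟨univ.val.map x, Multiset.le_iff_count.2 fun y => ?_, hcard, hsum⟩
  by_cases hy : y ∈ univ.val.map x
  · have hyS : y ∈ S := by
      obtain ⟨l, -, rfl⟩ := Multiset.mem_map.1 hy
      exact Multiset.mem_toFinset.1 (hx l)
    have hne : (univ.val.map x).count y ≠ m := by
      intro hcount_eq
      have hconst := Multiset.count_eq_card.1 (hcount_eq.trans hcard.symm)
      exact hij ((hconst _ (Multiset.mem_map_of_mem x (mem_univ i))).symm.trans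
        (hconst _ (Multiset.mem_map_of_mem x (mem_univ j))))
    have hle := (Multiset.count_le_card y (univ.val.map x)).trans_eq hcard
    exact (Nat.le_sub_one_of_lt (lt_of_le_of_ne hle hne)).trans (hcount y hyS)
  · rw [Multiset.count_eq_zero_of_notMem hy]
    exact Nat.zero_le _

theorem PropertyD.exists_isZeroSumRigid [DecidableEq G] (hD : PropertyD G) :
    ∃ T : Finset G, IsZeroSumRigid (exponent G) T ∧ EGZ G ≤ (exponent G - 1) * #T + 1 := by
  obtain hzero | hpos := (EGZ G).eq_zero_or_pos
  · exact ⟨∅, fun x hx _ i => absurd (hx i) (notMem_empty _), by lia⟩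
  have hnot : ¬ForcesZeroSum G (exponent G) (EGZ G - 1) :=
    Nat.notMem_of_lt_sInf (s := {L | ForcesZeroSum G (exponent G) L}) (Nat.sub_one_lt hpos.ne')
  simp only [ForcesZeroSum, not_forall] at hnot
  obtain ⟨S, hS, hfree⟩ := hnot
  have hcount := hD S hS hfree
  refine ⟨S.toFinset, isZeroSumRigid_toFinset hfree fun x hx => (hcount x hx).ge, ?_⟩
  have hcard : S.card = #S.toFinset * (exponent G - 1) := by
    rw [← Multiset.toFinset_sum_count_eq,
      sum_const_nat fun x hx => hcount x (Multiset.mem_toFinset.1 hx)]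
  lia

theorem exponent_pi_zmod (ι : Type*) [Nonempty ι] (k : ℕ) : exponent (ι → ZMod k) = k := by
  refine Nat.dvd_antisymm
    (AddMonoid.exponent_dvd_of_forall_nsmul_eq_zero fun x => funext fun i => by simp) ?_
  have hdvd := AddMonoidHom.exponent_dvd (f := Pi.evalAddMonoidHom (fun _ : ι => ZMod k)
    (Classical.arbitrary ι)) (Function.surjective_eval _)
  rwa [ZMod.exponent] at hdvd

end EGZ

section LinearAlgebra

variable {F α : Type*} [Field F]

theorem exists_mem_forall_mul_eq_zero_imp [Finite α] (V : Submodule F (α → F)) :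
    ∃ h ∈ V, ∀ v ∈ V, h * v = 0 → v = 0 := by
  obtain ⟨h, hV, hmax⟩ := Set.Finite.exists_maximalFor' Function.support (V : Set (α → F))
    (Set.toFinite _) ⟨0, V.zero_mem⟩
  refine ⟨h, hV, fun v hv hhv => ?_⟩
  have hzero (x : α) : h x = 0 ∨ v x = 0 := mul_eq_zero.1 (congrFun hhv x)
  have hsub : Function.support h ⊆ Function.support (h + v) := by
    intro x hx
    simpa [(hzero x).resolve_left hx] using hx
  funext x
  by_contra hx
  have hhx : h x = 0 := (hzero x).resolve_right hx
  exact hmax (V.add_mem hV hv) hsub (a := x) (by simpa [hhx] using hx) hhx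

variable [Fintype α] {m : ℕ}

-- For `h` in `V` of maximal support, `v ↦ h ^ (m - 2) * v` embeds `V` into its orthogonal
-- complement.
theorem two_mul_finrank_le_card_of_sum_prod_eq_zero_s3 (hm : 2 ≤ m) (V : Submodule F (α → F))
    (hV : ∀ g : Fin m → α → F, (∀ i, g i ∈ V) → ∑ x, ∏ i, g i x = 0) :
    2 * Module.finrank F V ≤ Fintype.card α := by
  classical
  obtain ⟨t, rfl⟩ := Nat.exists_eq_add_of_le' hm
  obtain ⟨h, hhV, hh⟩ := exists_mem_forall_mul_eq_zero_imp V
  let Ψ : V →ₗ[F] Module.Dual F (α → F) :=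
    (dotProductEquiv F α).toLinearMap ∘ₗ LinearMap.mulLeft F (h ^ t) ∘ₗ V.subtype
  have hΨ : Function.Injective Ψ := by
    rw [injective_iff_map_eq_zero]
    intro v hv
    have hpow : h ^ t * v.1 = 0 := (dotProductEquiv F α).map_eq_zero_iff.1 hv
    refine Subtype.ext (hh v v.2 (funext fun x => ?_))
    have hx : h x = 0 ∨ v.1 x = 0 :=
      (mul_eq_zero.1 (congrFun hpow x)).imp_left eq_zero_of_pow_eq_zero
    exact mul_eq_zero.2 hx
  have hrange : LinearMap.range Ψ ≤ V.dualAnnihilator := by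
    rintro _ ⟨v, rfl⟩
    rw [Submodule.mem_dualAnnihilator]
    intro u hu
    rw [← hV (Fin.cons u (Fin.cons v.1 fun _ => h))
      (Fin.cases hu (Fin.cases v.2 fun _ => hhV))]
    refine sum_congr rfl fun x _ => ?_
    simp only [Fin.prod_univ_succ, Fin.cons_zero, Fin.cons_succ, prod_const, card_univ,
      Fintype.card_fin, LinearMap.comp_apply, LinearMap.mulLeft_apply, Submodule.subtype_apply,
      Pi.mul_apply, Pi.pow_apply]
    ring
  have hfinrank := LinearMap.finrank_range_of_inj hΨ
  have hle := Submodule.finrank_mono hrange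
  have hadd := Subspace.finrank_add_finrank_dualAnnihilator_eq V
  rw [Module.finrank_pi] at hadd
  lia

theorem card_le_two_mul_card_of_sum_prod_eq_zero {κ : Type*} [Fintype κ] (hm : 2 ≤ m)
    (Φ : κ → α → F)
    (hΦ : ∀ g : Fin m → α → F, (∀ i j, Φ j ⬝ᵥ g i = 0) → ∑ x, ∏ i, g i x = 0) :
    Fintype.card α ≤ 2 * Fintype.card κ := by
  let Λ : (α → F) →ₗ[F] κ → F := (Matrix.of Φ).mulVecLin
  have hker : 2 * Module.finrank F (LinearMap.ker Λ) ≤ Fintype.card α :=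
    two_mul_finrank_le_card_of_sum_prod_eq_zero_s3 hm _ fun g hg =>
      hΦ g fun i j => congrFun (LinearMap.mem_ker.1 (hg i)) j
  have hrange := Submodule.finrank_le (LinearMap.range Λ)
  have hadd := LinearMap.finrank_range_add_finrank_ker Λ
  rw [Module.finrank_pi] at hrange hadd
  lia

end LinearAlgebra

theorem add_one_pow_eq_sum_fin {R : Type*} [CommSemiring R] (y : R) {n q : ℕ} (hn : n < q) :
    (y + 1) ^ n = ∑ j : Fin q, n.choose j * y ^ (j : ℕ) := by
  rw [add_pow, Fin.sum_univ_eq_sum_range fun j => (n.choose j : R) * y ^ j,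
    ← sum_subset (range_subset_range.2 hn) fun j _ hj => by
      rw [Nat.choose_eq_zero_of_lt (by simpa using hj), Nat.cast_zero, zero_mul]]
  exact sum_congr rfl fun j _ => by rw [one_pow, mul_one, mul_comm]

theorem prod_add_one_pow_eq_sum {R κ : Type*} [CommSemiring R] [Fintype κ] [DecidableEq κ] (y : R)
    {q : ℕ} {n : κ → ℕ} (hn : ∀ i, n i < q) :
    ∏ i, (y + 1) ^ n i =
      ∑ J : κ → Fin q, (∏ i, (n i).choose (J i)) • y ^ ∑ i, (J i : ℕ) := by
  simp only [add_one_pow_eq_sum_fin y (hn _), Fintype.prod_sum, prod_mul_distrib,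
    prod_pow_eq_pow_sum, nsmul_eq_mul, Nat.cast_prod]

-- In the group algebra, `Y = [1] - 1` satisfies `Y ^ p ^ r = 0`, and `[a] = (Y + 1) ^ a.val`. Hence
-- `[∑ i, x i]` is a combination of the `Y ^ d` with `d < p ^ r`; compare coefficients at `0`.
theorem exists_ite_sum_eq_zero_eq_sum_prod_choose (p r : ℕ) [Fact p.Prime] (κ : Type*)
    [Fintype κ] [DecidableEq κ] :
    ∃ c : ℕ → ZMod p, (∀ d, p ^ r ≤ d → c d = 0) ∧ ∀ x : κ → ZMod (p ^ r),
      (if ∑ i, x i = 0 then 1 else 0) = ∑ J : κ → Fin (p ^ r),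
        c (∑ i, (J i : ℕ)) * ∏ i, ((x i).val.choose (J i) : ZMod p) := by
  let Y : AddMonoidAlgebra (ZMod p) (ZMod (p ^ r)) := .single 1 1 - 1
  have hY : Y ^ p ^ r = 0 := by
    have := charP_of_injective_algebraMap
      (algebraMap (ZMod p) (AddMonoidAlgebra (ZMod p) (ZMod (p ^ r)))).injective p
    rw [sub_pow_char_pow, one_pow, AddMonoidAlgebra.single_pow, nsmul_one, ZMod.natCast_self,
      one_pow, AddMonoidAlgebra.one_def, sub_self]
  have hsingle (a : ZMod (p ^ r)) : AddMonoidAlgebra.single a (1 : ZMod p) = (Y + 1) ^ a.val := by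
    rw [sub_add_cancel, AddMonoidAlgebra.single_pow, nsmul_one, ZMod.natCast_zmod_val, one_pow]
  refine ⟨fun d => (Y ^ d).coeff 0, fun d hd => ?_, fun x => ?_⟩
  · simp [pow_eq_zero_of_le hd hY]
  · calc (if ∑ i, x i = 0 then 1 else 0)
        = (∏ i, AddMonoidAlgebra.single (x i) (1 : ZMod p)).coeff 0 := by
          rw [AddMonoidAlgebra.prod_single, prod_const_one, AddMonoidAlgebra.coeff_single,
            Finsupp.single_apply]
      _ = (∑ J : κ → Fin (p ^ r),
            (∏ i, (x i).val.choose (J i)) • Y ^ ∑ i, (J i : ℕ)).coeff 0 := by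
          simp only [hsingle, prod_add_one_pow_eq_sum Y fun i => ZMod.val_lt (x i)]
      _ = ∑ J : κ → Fin (p ^ r), (∏ i, (x i).val.choose (J i)) • (Y ^ ∑ i, (J i : ℕ)).coeff 0 := by
          simp only [AddMonoidAlgebra.coeff_sum, AddMonoidAlgebra.coeff_smul, Finsupp.coe_finsetSum,
            Finset.sum_apply, Finsupp.smul_apply]
      _ = _ := sum_congr rfl fun J _ => by rw [nsmul_eq_mul, Nat.cast_prod, mul_comm]

theorem two_mul_card_sum_lt_le_centralBinom (ι : Type*) [Fintype ι] [DecidableEq ι] (q : ℕ) :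
    2 * Fintype.card {J : ι → Fin q // ∑ l, (J l : ℕ) < Fintype.card ι} ≤
      (Fintype.card ι).centralBinom := by
  cases hι : Fintype.card ι with
  | zero => simp
  | succ n =>
    -- The extra coordinate `none` takes up the slack.
    let f (J : {J : ι → Fin q // ∑ l, (J l : ℕ) < n + 1}) : {P : Option ι → ℕ // ∑ l, P l = n} :=
      ⟨fun l => l.elim (n - ∑ l, (J.1 l : ℕ)) fun l => J.1 l, by
        have hJ := J.2
        simp only [Fintype.sum_option, Option.elim_none, Option.elim_some]
        lia⟩
    have hf : Function.Injective f := fun J J' h =>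
      Subtype.ext (funext fun l => Fin.ext (congrFun (congrArg Subtype.val h) (some l)))
    have hcard := Fintype.card_le_of_injective _
      ((Sym.equivNatSumOfFintype (Option ι) n).symm.injective.comp hf)
    rw [Sym.card_sym_eq_choose, Fintype.card_option, hι,
      show n + 1 + 1 + n - 1 = 2 * n + 1 by lia] at hcard
    rw [Nat.centralBinom_eq_two_mul_choose, mul_add_one, Nat.choose_succ_succ, Nat.choose_symm_half,
      ← two_mul]
    exact Nat.mul_le_mul_left 2 hcard

section BinomialMonomial

variable {ι κ : Type*} [Fintype ι]

/-- The function `a ↦ ∏ l, (a l).choose (J l)` on `(ℤ/q)^ι` with values in `ℤ/p`, where each `a l`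
is represented in `[0, q)`. It plays the role of a monomial of degree `∑ l, J l`. -/
def binomialMonomial (p : ℕ) {q : ℕ} (J : ι → Fin q) (a : ι → ZMod q) : ZMod p :=
  ∏ l, ((a l).val.choose (J l) : ZMod p)

theorem exists_sum_lt_card [Fintype κ] [Nonempty ι] {d : ι → κ → ℕ}
    (hd : ∀ l, ∑ i, d l i < Fintype.card κ) : ∃ i, ∑ l, d l i < Fintype.card ι := by
  obtain ⟨i, -, hi⟩ : ∃ i ∈ univ, ∑ l, d l i < Fintype.card ι := by
    refine exists_lt_of_sum_lt ?_
    calc ∑ i, ∑ l, d l i = ∑ l, ∑ i, d l i := sum_comm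
      _ < ∑ _l : ι, Fintype.card κ := sum_lt_sum_of_nonempty univ_nonempty fun l _ => hd l
      _ = ∑ _i : κ, Fintype.card ι := by simp [mul_comm]
  exact ⟨i, hi⟩

theorem exists_ite_sum_eq_zero_eq_sum_prod_binomialMonomial (p r : ℕ) [Fact p.Prime]
    (ι κ : Type*) [Fintype ι] [DecidableEq ι] [Fintype κ] [DecidableEq κ] :
    ∃ C : (ι → κ → Fin (p ^ r)) → ZMod p, (∀ J, C J ≠ 0 → ∀ l, ∑ i, (J l i : ℕ) < p ^ r) ∧
      ∀ w : κ → ι → ZMod (p ^ r), (if ∑ i, w i = 0 then 1 else 0) =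
        ∑ J, C J * ∏ i, binomialMonomial p (fun l => J l i) (w i) := by
  obtain ⟨c, hc, hcx⟩ := exists_ite_sum_eq_zero_eq_sum_prod_choose p r κ
  refine ⟨fun J => ∏ l, c (∑ i, (J l i : ℕ)), fun J hJ l => ?_, fun w => ?_⟩
  · by_contra! hl
    exact hJ (prod_eq_zero (mem_univ l) (hc _ hl))
  · calc (if ∑ i, w i = 0 then (1 : ZMod p) else 0)
        = ∏ l, if ∑ i, w i l = 0 then 1 else 0 := by
          simp [prod_ite_zero, funext_iff]
      _ = ∑ J : ι → κ → Fin (p ^ r), ∏ l,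
            (c (∑ i, (J l i : ℕ)) * ∏ i, ((w i l).val.choose (J l i) : ZMod p)) := by
          simp only [hcx, Fintype.prod_sum]
      _ = _ := sum_congr rfl fun J _ => by
          rw [prod_mul_distrib, prod_comm]
          rfl

theorem sum_ite_sum_eq_zero_mul_prod_eq_zero {p r : ℕ} [Fact p.Prime] {α : Type*} [Fintype α]
    [Nonempty ι] [Fintype κ] [DecidableEq κ] (hκ : Fintype.card κ = p ^ r)
    (v : α → ι → ZMod (p ^ r)) {g : κ → α → ZMod p}
    (hg : ∀ i (J : ι → Fin (p ^ r)), ∑ l, (J l : ℕ) < Fintype.card ι →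
      (fun x => binomialMonomial p J (v x)) ⬝ᵥ g i = 0) :
    ∑ w : κ → α, (if ∑ i, v (w i) = 0 then 1 else 0) * ∏ i, g i (w i) = 0 := by
  classical
  obtain ⟨C, hC, hCw⟩ := exists_ite_sum_eq_zero_eq_sum_prod_binomialMonomial p r ι κ
  have hterm (J : ι → κ → Fin (p ^ r)) :
      C J * ∏ i, (fun x => binomialMonomial p (fun l => J l i) (v x)) ⬝ᵥ g i = 0 := by
    by_cases hJ : C J = 0
    · rw [hJ, zero_mul]
    · obtain ⟨i, hi⟩ := exists_sum_lt_card fun l => (hC J hJ l).trans_eq hκ.symm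
      rw [prod_eq_zero (mem_univ i) (hg i _ hi), mul_zero]
  calc ∑ w : κ → α, (if ∑ i, v (w i) = 0 then 1 else 0) * ∏ i, g i (w i)
      = ∑ w : κ → α, ∑ J, C J *
          ∏ i, (binomialMonomial p (fun l => J l i) (v (w i)) * g i (w i)) := by
        simp only [hCw, sum_mul, mul_assoc, prod_mul_distrib]
    _ = ∑ J, C J * ∏ i, (fun x => binomialMonomial p (fun l => J l i) (v x)) ⬝ᵥ g i := by
        rw [sum_comm]
        simp only [← mul_sum, dotProduct, Fintype.prod_sum]
    _ = 0 := sum_eq_zero fun J _ => hterm J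

end BinomialMonomial

namespace IsZeroSumRigid

theorem sum_prod_eq {G R : Type*} [AddCommMonoid G] [DecidableEq G] [CommSemiring R] {m : ℕ}
    [NeZero m] {T : Finset G} (hT : IsZeroSumRigid m T) (hm : ∀ a ∈ T, m • a = 0)
    (g : Fin m → T → R) :
    ∑ a, ∏ i, g i a =
      ∑ w : Fin m → T, (if ∑ i, (w i : G) = 0 then 1 else 0) * ∏ i, g i (w i) := by
  refine sum_of_injOn (fun a _ => a) (fun a _ b _ hab => congrFun hab 0)
    (fun a _ => mem_coe.2 (mem_univ _)) (fun w _ hw => ?_) fun a _ => ?_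
  · rw [if_neg, zero_mul]
    exact fun hsum => hw ⟨w 0, mem_coe.2 (mem_univ _), funext fun i =>
      Subtype.ext (hT (fun i => w i) (fun i => (w i).2) hsum 0 i)⟩
  · rw [if_pos, one_mul]
    simpa using hm a a.2

theorem card_le_centralBinom {p r : ℕ} [Fact p.Prime] (hr : r ≠ 0) {ι : Type*} [Fintype ι]
    [Nonempty ι] {T : Finset (ι → ZMod (p ^ r))} (hT : IsZeroSumRigid (p ^ r) T) :
    #T ≤ (Fintype.card ι).centralBinom := by
  classical
  have hq : 2 ≤ p ^ r := (Fact.out : p.Prime).two_le.trans (Nat.le_self_pow hr p)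
  let Φ (J : {J : ι → Fin (p ^ r) // ∑ l, (J l : ℕ) < Fintype.card ι}) (a : T) : ZMod p :=
    binomialMonomial p J.1 a
  have hΦ := card_le_two_mul_card_of_sum_prod_eq_zero hq Φ fun g hg => by
    rw [hT.sum_prod_eq (fun a _ => funext fun l => by simp) g]
    exact sum_ite_sum_eq_zero_mul_prod_eq_zero (Fintype.card_fin _) (fun a : T => a.1)
      fun i J hJ => hg i ⟨J, hJ⟩
  rw [Fintype.card_coe] at hΦ
  exact hΦ.trans (two_mul_card_sum_lt_le_centralBinom ι (p ^ r))

end IsZeroSumRigid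

theorem PropertyD.forcesZeroSum_zmod_prime_pow {p r : ℕ} (hp : p.Prime) (hr : r ≠ 0) {ι : Type*}
    [Fintype ι] [Nonempty ι] (hD : PropertyD (ι → ZMod (p ^ r))) :
    ForcesZeroSum (ι → ZMod (p ^ r)) (p ^ r)
      ((p ^ r - 1) * (Fintype.card ι).centralBinom + 1) := by
  classical
  have : Fact p.Prime := ⟨hp⟩
  obtain ⟨T, hT, hle⟩ := hD.exists_isZeroSumRigid
  have hforces := forcesZeroSum_exponent_iff_egz_le.2 hle
  rw [exponent_pi_zmod] at hT hforces
  refine hforces.mono ?_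
  gcongr
  exact hT.card_le_centralBinom hr

theorem stmt_3_general {ι : Type*} [Fintype ι] [Nonempty ι] {k : ℕ} (hk : k ≠ 0)
    (hD : ∀ p ∈ k.primeFactors, PropertyD (ι → ZMod (p ^ k.factorization p))) :
    EGZ (ι → ZMod k) ≤ (k - 1) * (Fintype.card ι).centralBinom + 1 := by
  have : NeZero k := ⟨hk⟩
  rw [← forcesZeroSum_exponent_iff_egz_le, exponent_pi_zmod]
  refine .zmod_of_forall_primeFactors _ hk fun p hp => ?_
  exact (hD p hp).forcesZeroSum_zmod_prime_pow (Nat.prime_of_mem_primeFactors hp)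
    (Finsupp.mem_support_iff.1 hp)

theorem stmt_3 (k n : ℕ) (hk : 2 ≤ k) (hn : 1 ≤ n)
    (hD : ∀ p ∈ k.primeFactors, PropertyD (Fin n → ZMod (p ^ k.factorization p))) :
    EGZ (Fin n → ZMod k) ≤ (k - 1) * 4 ^ n + k := by
  have : NeZero n := ⟨by lia⟩
  calc EGZ (Fin n → ZMod k) ≤ (k - 1) * n.centralBinom + 1 := by
        simpa only [Fintype.card_fin] using stmt_3_general (by lia) hD
    _ ≤ (k - 1) * 4 ^ n + k := by
        gcongr
        · exact n.centralBinom_le_four_pow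
        · lia
end
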